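/- arXiv:1904.10055 — 9 statements merged into one kernel-verified Lean document; each statement's English description precedes it below -/
import Mathlib

section
/- Let e ∈ ℝ⁴ be a nonzero vector and let F_{αβ} : ℝ⁴ → ℝ (α, β ∈ {0,1,2,3}) be smooth compactly supported functions that are antisymmetric, F_{αβ} = −F_{βα}, and satisfy the Bianchi identity ∂_γ F_{αβ}(x) + ∂_α F_{βγ}(x) + ∂_β F_{γα}(x) = 0 for all indices α, β, γ and all x ∈ ℝ⁴. Define A_α(x) = ∫₀^∞ Σ_β F_{αβ}(x + t·e) e_β dt. Then for every x the integrand is integrable on (0,∞), each A_α is differentiable, and ∂_α A_β(x) − ∂_β A_α(x) = F_{αβ}(x) for all α, β and all x ∈ ℝ⁴ (i.e. the string-localized potential A obtained by integrating the closed two-form F along the ray in direction e has curl equal to F). -/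
/-!
The contracted two-form `G_α = ∑ β, F_{αβ} e_β` is smooth with compact support, and since `e ≠ 0` the
ray `t ↦ x + t e` is a closed embedding, so every integrand restricted to a ray is continuous with
compact support. For `x` in a bounded set the rays meet the support only for `t` in a fixed bounded
interval, which gives a dominating function and allows differentiation under the integral sign
(`hasFDerivAt_integral_ray`). Antisymmetry and the Bianchi identity then give the pointwise identity
`∂_α G_β - ∂_β G_α = -∑ γ, e_γ ∂_γ F_{αβ}` (`pd4_contract_sub`). Along the ray the right-hand side is
`-d/dt F_{αβ}(x + t e)`, whose integral over `(0, ∞)` is `F_{αβ}(x)` (`integral_fderiv_ray`).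
-/

open MeasureTheory

/-- Partial derivative of a function on ℝ⁴ in the direction of the α-th
standard basis vector. -/
noncomputable def pd4 (f : (Fin 4 → ℝ) → ℝ) (i : Fin 4) (x : Fin 4 → ℝ) : ℝ :=
  fderiv ℝ f x (Pi.single i 1)

/-- The string-localized potential `A_α(x) = ∫₀^∞ Σ_β F_{αβ}(x + t e) e_β dt`. -/
noncomputable def stringPot (e : Fin 4 → ℝ) (F : Fin 4 → Fin 4 → (Fin 4 → ℝ) → ℝ)
    (α : Fin 4) (x : Fin 4 → ℝ) : ℝ :=
  ∫ t in Set.Ioi (0 : ℝ), ∑ β, F α β (x + t • e) * e β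

section Ray

variable {E V : Type*} [NormedAddCommGroup E] [NormedSpace ℝ E]
  [NormedAddCommGroup V]

lemma hasCompactSupport_ray {e : E} (he : e ≠ 0) {f : E → V} (hf : HasCompactSupport f) (x : E) :
    HasCompactSupport (fun t : ℝ => f (x + t • e)) :=
  hf.comp_isClosedEmbedding
    ((Homeomorph.addLeft x).isClosedEmbedding.comp (isClosedEmbedding_smul_left he))

lemma integrable_ray {e : E} (he : e ≠ 0) {f : E → V} (hc : Continuous f)
    (hf : HasCompactSupport f) (x : E) :
    Integrable (fun t : ℝ => f (x + t • e)) :=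
  (hc.comp (by fun_prop : Continuous fun t : ℝ => x + t • e)).integrable_of_hasCompactSupport
    (hasCompactSupport_ray he hf x)

lemma hasFDerivAt_integral_ray {e : E} (he : e ≠ 0) {f : E → ℝ} (hf : ContDiff ℝ 1 f)
    (hfc : HasCompactSupport f) (x₀ : E) :
    HasFDerivAt (fun x => ∫ t in Set.Ioi (0 : ℝ), f (x + t • e))
      (∫ t in Set.Ioi (0 : ℝ), fderiv ℝ f (x₀ + t • e)) x₀ := by
  have hdc : Continuous (fderiv ℝ f) := hf.continuous_fderiv one_ne_zero
  have hds : HasCompactSupport (fderiv ℝ f) := hfc.fderiv (𝕜 := ℝ)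
  obtain ⟨C, hC⟩ := hdc.bounded_above_of_compact_support hds
  obtain ⟨R, hR⟩ := hds.isCompact.isBounded.exists_norm_le
  have he' : 0 < ‖e‖ := norm_pos_iff.2 he
  -- Rays based in the unit ball around `x₀` leave the support of `fderiv ℝ f` once `T < |t|`.
  set T : ℝ := (R + (‖x₀‖ + 1)) / ‖e‖ with hT
  refine hasFDerivAt_integral_of_dominated_of_fderiv_le
    (F := fun x t => f (x + t • e)) (F' := fun x t => fderiv ℝ f (x + t • e))
    (bound := (Set.Icc (-T) T).indicator fun _ => C)
    (Metric.ball_mem_nhds x₀ one_pos)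
    (Filter.Eventually.of_forall fun x =>
      (integrable_ray he hf.continuous hfc x).aestronglyMeasurable.restrict)
    (integrable_ray he hf.continuous hfc x₀).restrict
    (integrable_ray he hdc hds x₀).aestronglyMeasurable.restrict
    (Filter.Eventually.of_forall fun t x hx => ?_) ?_
    (Filter.Eventually.of_forall fun t x _ => ?_)
  · by_cases ht : t ∈ Set.Icc (-T) T
    · rw [Set.indicator_of_mem ht]
      exact hC _
    · rw [Set.indicator_of_notMem ht, norm_le_zero_iff]
      by_contra hne
      have h1 := hR _ (subset_tsupport _ (Function.mem_support.2 hne))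
      refine ht (abs_le.1 ?_)
      rw [hT, le_div_iff₀ he', ← Real.norm_eq_abs, ← norm_smul]
      have h2 : ‖x‖ ≤ ‖x₀‖ + 1 := by
        have h3 := norm_le_norm_add_norm_sub' x x₀
        rw [mem_ball_iff_norm] at hx
        linarith
      have h4 := norm_sub_le (x + t • e) x
      rw [add_sub_cancel_left] at h4
      linarith
  · exact ((integrable_indicator_iff measurableSet_Icc).2
      (integrableOn_const measure_Icc_lt_top.ne)).restrict
  · exact (hf.differentiable one_ne_zero _).hasFDerivAt.comp x
      ((hasFDerivAt_id x).add_const (t • e))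

lemma integral_fderiv_ray {e : E} (he : e ≠ 0) {f : E → ℝ} (hf : ContDiff ℝ 1 f)
    (hfc : HasCompactSupport f) (x : E) :
    ∫ t in Set.Ioi (0 : ℝ), fderiv ℝ f (x + t • e) e = -f x := by
  have hd : ∀ t : ℝ, deriv (fun t : ℝ => f (x + t • e)) t = fderiv ℝ f (x + t • e) e := by
    intro t
    have h1 : HasDerivAt (fun t : ℝ => x + t • e) e t := by
      simpa using ((hasDerivAt_id t).smul_const e).const_add x
    exact ((hf.differentiable one_ne_zero _).hasFDerivAt.comp_hasDerivAt t h1).deriv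
  have h := (hasCompactSupport_ray he hfc x).integral_Ioi_deriv_eq
    (hf.comp (by fun_prop : ContDiff ℝ 1 fun t : ℝ => x + t • e)) 0
  simpa [Function.comp_def, hd] using h

end Ray

/-- The contraction `G_α = ∑ β, F_{αβ} e_β` of the two-form with the string direction. -/
noncomputable def contract (e : Fin 4 → ℝ) (F : Fin 4 → Fin 4 → (Fin 4 → ℝ) → ℝ)
    (α : Fin 4) (x : Fin 4 → ℝ) : ℝ :=
  ∑ β, F α β x * e β

lemma contDiff_contract (e : Fin 4 → ℝ) {F : Fin 4 → Fin 4 → (Fin 4 → ℝ) → ℝ}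
    (hF : ∀ α β, ContDiff ℝ 1 (F α β)) (α : Fin 4) : ContDiff ℝ 1 (contract e F α) :=
  ContDiff.sum fun β _ => (hF α β).mul contDiff_const

lemma hasCompactSupport_contract (e : Fin 4 → ℝ) {F : Fin 4 → Fin 4 → (Fin 4 → ℝ) → ℝ}
    (hFc : ∀ α β, HasCompactSupport (F α β)) (α : Fin 4) :
    HasCompactSupport (contract e F α) := by
  have h : contract e F α = fun x => F α 0 x * e 0 + F α 1 x * e 1 + F α 2 x * e 2
      + F α 3 x * e 3 := by
    funext x
    simp [contract, Fin.sum_univ_four]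
  rw [h]
  exact ((((hFc α 0).mul_right).add (hFc α 1).mul_right).add (hFc α 2).mul_right).add
    (hFc α 3).mul_right

lemma pd4_contract (e : Fin 4 → ℝ) {F : Fin 4 → Fin 4 → (Fin 4 → ℝ) → ℝ}
    (hF : ∀ α β, ContDiff ℝ 1 (F α β)) (α β : Fin 4) (x : Fin 4 → ℝ) :
    pd4 (contract e F β) α x = ∑ γ, pd4 (F β γ) α x * e γ := by
  have h : HasFDerivAt (contract e F β) (∑ γ, e γ • fderiv ℝ (F β γ) x) x :=
    HasFDerivAt.fun_sum fun γ _ =>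
      ((hF β γ).differentiable one_ne_zero x).hasFDerivAt.mul_const (e γ)
  simp [pd4, h.fderiv, mul_comm]

/-- Antisymmetry and the Bianchi identity: the curl of the contraction is minus the derivative of
`F_{αβ}` in the string direction (Cartan's formula for a closed form). -/
lemma pd4_contract_sub (e : Fin 4 → ℝ) {F : Fin 4 → Fin 4 → (Fin 4 → ℝ) → ℝ}
    (hF : ∀ α β, ContDiff ℝ 1 (F α β))
    (hanti : ∀ α β x, F α β x = - F β α x)
    (hBianchi : ∀ α β γ x,
      pd4 (F α β) γ x + pd4 (F β γ) α x + pd4 (F γ α) β x = 0)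
    (α β : Fin 4) (x : Fin 4 → ℝ) :
    pd4 (contract e F β) α x - pd4 (contract e F α) β x = -fderiv ℝ (F α β) x e := by
  have hneg : ∀ γ, pd4 (F α γ) β x = -pd4 (F γ α) β x := by
    intro γ
    have h : F α γ = fun y => -F γ α y := funext (hanti α γ)
    rw [h]
    simp [pd4]
  have he : fderiv ℝ (F α β) x e = ∑ γ, pd4 (F α β) γ x * e γ := by
    conv_lhs => rw [pi_eq_sum_univ' e]
    simp [pd4, map_sum, mul_comm]
  rw [pd4_contract e hF, pd4_contract e hF, he, ← Finset.sum_sub_distrib, ← Finset.sum_neg_distrib]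
  refine Finset.sum_congr rfl fun γ _ => ?_
  rw [hneg]
  linear_combination e γ * hBianchi α β γ x

/-- The string-localized potential obtained by integrating a smooth, compactly
supported, antisymmetric two-form satisfying the Bianchi identity along the ray
in direction `e ≠ 0` is well defined, differentiable, and has curl equal to `F`. -/
theorem string_localized_potential_curl
    (e : Fin 4 → ℝ) (he : e ≠ 0)
    (F : Fin 4 → Fin 4 → (Fin 4 → ℝ) → ℝ)
    (hF : ∀ α β, ContDiff ℝ (⊤ : ℕ∞) (F α β))
    (hFc : ∀ α β, HasCompactSupport (F α β))
    (hanti : ∀ α β x, F α β x = - F β α x)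
    (hBianchi : ∀ α β γ x,
      pd4 (F α β) γ x + pd4 (F β γ) α x + pd4 (F γ α) β x = 0) :
    (∀ α x, IntegrableOn (fun t : ℝ => ∑ β, F α β (x + t • e) * e β) (Set.Ioi 0)) ∧
    (∀ α, Differentiable ℝ (stringPot e F α)) ∧
    (∀ α β x, pd4 (stringPot e F β) α x - pd4 (stringPot e F α) β x = F α β x) := by
  have hF1 : ∀ α β, ContDiff ℝ 1 (F α β) := fun α β => (hF α β).of_le (by exact_mod_cast le_top)
  have hG := contDiff_contract e hF1
  have hGc := hasCompactSupport_contract e hFc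
  have hder : ∀ α x, HasFDerivAt (stringPot e F α)
      (∫ t in Set.Ioi (0 : ℝ), fderiv ℝ (contract e F α) (x + t • e)) x :=
    fun α x => hasFDerivAt_integral_ray he (hG α) (hGc α) x
  have hint : ∀ α x, Integrable (fun t : ℝ => fderiv ℝ (contract e F α) (x + t • e))
      (volume.restrict (Set.Ioi 0)) := fun α x =>
    (integrable_ray he ((hG α).continuous_fderiv one_ne_zero) ((hGc α).fderiv (𝕜 := ℝ)) x).restrict
  have hpd : ∀ α β x, pd4 (stringPot e F β) α x =
      ∫ t in Set.Ioi (0 : ℝ), pd4 (contract e F β) α (x + t • e) := by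
    intro α β x
    rw [pd4, (hder β x).fderiv, ContinuousLinearMap.integral_apply (hint β x)]
    rfl
  refine ⟨fun α x => (integrable_ray he (hG α).continuous (hGc α) x).integrableOn,
    fun α x => (hder α x).differentiableAt, fun α β x => ?_⟩
  have hint' : ∀ α β, Integrable (fun t : ℝ => pd4 (contract e F β) α (x + t • e))
      (volume.restrict (Set.Ioi 0)) := fun α β => (hint β x).apply_continuousLinearMap _
  rw [hpd, hpd, ← integral_sub (hint' α β) (hint' β α)]
  simp_rw [pd4_contract_sub e hF1 hanti hBianchi α β]
  rw [integral_neg, integral_fderiv_ray he (hF1 α β) (hFc α β), neg_neg]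
end

section
/- Let s : ℝ³ → ℝ be a compactly supported C¹ function and let γ : [0,1] → ℝ³ be a C¹ path. Then the vector field g_γ(x) = ∫₀¹ s(x − γ(u)) γ'(u) du is differentiable and its divergence satisfies div g_γ(x) = s(x − γ(0)) − s(x − γ(1)) for all x ∈ ℝ³. In particular, if γ is a closed path (γ(0) = γ(1)), then div g_γ = 0. -/
/-!
Differentiating under the integral sign, the derivative of `g_γ` at `x` is
`∫₀¹ γ'(u) ⊗ Ds(x − γ(u)) du`; domination holds because `Ds` is continuous with compact support,
hence bounded (`hasFDerivAt_pathField`). The divergence is the trace of this derivative, and the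
trace of the rank-one map `γ'(u) ⊗ Ds(x − γ(u))` is `Ds(x − γ(u)) γ'(u) = −d/du s(x − γ(u))`, so
the fundamental theorem of calculus gives the boundary values (`sum_integral_smulRight`).
-/

open MeasureTheory

/-- Partial derivative of a function on ℝ³ in the i-th coordinate direction. -/
noncomputable def pd (f : (Fin 3 → ℝ) → ℝ) (i : Fin 3) (x : Fin 3 → ℝ) : ℝ :=
  fderiv ℝ f x (Pi.single i 1)

/-- Divergence of a vector field on ℝ³: `div v = ∂₁v₁ + ∂₂v₂ + ∂₃v₃`. -/
noncomputable def div3 (v : (Fin 3 → ℝ) → Fin 3 → ℝ) (x : Fin 3 → ℝ) : ℝ :=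
  ∑ i, pd (fun y => v y i) i x

/-- The path-smeared vector field `g_γ(x) = ∫₀¹ s(x − γ(u)) γ'(u) du`. -/
noncomputable def pathField (s : (Fin 3 → ℝ) → ℝ) (γ : ℝ → Fin 3 → ℝ)
    (x : Fin 3 → ℝ) : Fin 3 → ℝ :=
  ∫ u in (0:ℝ)..1, s (x - γ u) • deriv γ u

lemma continuous_smulRight_path {s : (Fin 3 → ℝ) → ℝ} (hs : ContDiff ℝ 1 s)
    {γ : ℝ → Fin 3 → ℝ} (hγ : ContDiff ℝ 1 γ) (x : Fin 3 → ℝ) :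
    Continuous fun u => (fderiv ℝ s (x - γ u)).smulRight (deriv γ u) := by
  have h1 : Continuous fun u => fderiv ℝ s (x - γ u) :=
    (hs.continuous_fderiv one_ne_zero).comp (continuous_const.sub hγ.continuous)
  have h2 : Continuous (deriv γ) := hγ.continuous_deriv le_rfl
  fun_prop

lemma hasFDerivAt_pathField {s : (Fin 3 → ℝ) → ℝ} (hs : ContDiff ℝ 1 s)
    (hsc : HasCompactSupport s) {γ : ℝ → Fin 3 → ℝ} (hγ : ContDiff ℝ 1 γ) (x : Fin 3 → ℝ) :
    HasFDerivAt (pathField s γ)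
      (∫ u in (0:ℝ)..1, (fderiv ℝ s (x - γ u)).smulRight (deriv γ u)) x := by
  have hγ' : Continuous (deriv γ) := hγ.continuous_deriv le_rfl
  have hF : ∀ y, Continuous fun u => s (y - γ u) • deriv γ u := fun y =>
    (hs.continuous.comp (continuous_const.sub hγ.continuous)).smul hγ'
  obtain ⟨C, hC⟩ := (hsc.fderiv (𝕜 := ℝ)).exists_bound_of_continuous
    (hs.continuous_fderiv one_ne_zero)
  refine intervalIntegral.hasFDerivAt_integral_of_dominated_of_fderiv_le
    (F := fun y u => s (y - γ u) • deriv γ u)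
    (F' := fun y u => (fderiv ℝ s (y - γ u)).smulRight (deriv γ u))
    (bound := fun u => C * ‖deriv γ u‖) Filter.univ_mem
    (Filter.Eventually.of_forall fun y => (hF y).aestronglyMeasurable)
    ((hF x).intervalIntegrable _ _)
    (continuous_smulRight_path hs hγ x).aestronglyMeasurable
    (Filter.Eventually.of_forall fun u _ y _ => ?_)
    ((continuous_const.mul hγ'.norm).intervalIntegrable _ _)
    (Filter.Eventually.of_forall fun u _ y _ => ?_)
  · rw [ContinuousLinearMap.norm_smulRight_apply]
    exact mul_le_mul_of_nonneg_right (hC _) (norm_nonneg _)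
  · have h1 : HasFDerivAt (fun z => s (z - γ u)) (fderiv ℝ s (y - γ u)) y :=
      ((hs.differentiable one_ne_zero (y - γ u)).hasFDerivAt).comp y
        ((hasFDerivAt_id y).sub_const (γ u))
    exact h1.smul_const (deriv γ u)

lemma div3_eq_sum_of_hasFDerivAt {v : (Fin 3 → ℝ) → Fin 3 → ℝ} {x : Fin 3 → ℝ}
    {A : (Fin 3 → ℝ) →L[ℝ] (Fin 3 → ℝ)} (h : HasFDerivAt v A x) :
    div3 v x = ∑ i, A (Pi.single i 1) i := by
  refine Finset.sum_congr rfl fun i _ => ?_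
  rw [pd, ((hasFDerivAt_pi'.1 h) i).fderiv]
  rfl

/-- The trace of the derivative of `g_γ` telescopes along the path. -/
lemma sum_integral_smulRight {s : (Fin 3 → ℝ) → ℝ} (hs : ContDiff ℝ 1 s)
    {γ : ℝ → Fin 3 → ℝ} (hγ : ContDiff ℝ 1 γ) (x : Fin 3 → ℝ) :
    ∑ i, (∫ u in (0:ℝ)..1, (fderiv ℝ s (x - γ u)).smulRight (deriv γ u)) (Pi.single i 1) i
      = s (x - γ 0) - s (x - γ 1) := by
  -- The trace as a continuous linear functional, so that it commutes with the integral.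
  let L : ((Fin 3 → ℝ) →L[ℝ] (Fin 3 → ℝ)) →L[ℝ] ℝ :=
    ∑ i, (ContinuousLinearMap.proj (R := ℝ) (φ := fun _ : Fin 3 => ℝ) i).comp
      (ContinuousLinearMap.apply ℝ (Fin 3 → ℝ) (Pi.single i (1:ℝ) : Fin 3 → ℝ))
  have hL : ∀ A, L A = ∑ i, A (Pi.single i 1) i := fun A => by
    simp [L]
  have htrace : ∀ u, L ((fderiv ℝ s (x - γ u)).smulRight (deriv γ u))
      = fderiv ℝ s (x - γ u) (deriv γ u) := fun u => by
    rw [hL]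
    conv_rhs => rw [pi_eq_sum_univ' (deriv γ u), map_sum]
    refine Finset.sum_congr rfl fun i _ => ?_
    simp [mul_comm]
  have hderiv : ∀ u, HasDerivAt (fun u => -s (x - γ u)) (fderiv ℝ s (x - γ u) (deriv γ u)) u :=
    fun u => by
      have h1 : HasDerivAt (fun u => x - γ u) (-deriv γ u) u :=
        (hγ.differentiable one_ne_zero u).hasDerivAt.const_sub x
      have h2 := ((hs.differentiable one_ne_zero (x - γ u)).hasFDerivAt.comp_hasDerivAt u h1).neg
      rw [map_neg, neg_neg] at h2
      exact h2
  have hcont := continuous_smulRight_path hs hγ x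
  rw [← hL, ← L.intervalIntegral_comp_comm (hcont.intervalIntegrable _ _)]
  have hint := (L.continuous.comp hcont).intervalIntegrable (μ := volume) 0 1
  simp only [Function.comp_def, htrace] at hint ⊢
  rw [intervalIntegral.integral_eq_sub_of_hasDerivAt (fun u _ => hderiv u) hint]
  ring

/-- For a compactly supported C¹ function `s` and a C¹ path `γ`, the path-smeared
field `g_γ` is differentiable with `div g_γ(x) = s(x − γ(0)) − s(x − γ(1))`;
in particular `div g_γ = 0` for closed paths. -/
theorem div_pathField (s : (Fin 3 → ℝ) → ℝ) (hs : ContDiff ℝ 1 s)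
    (hsc : HasCompactSupport s) (γ : ℝ → Fin 3 → ℝ) (hγ : ContDiff ℝ 1 γ) :
    Differentiable ℝ (pathField s γ) ∧
    (∀ x, div3 (pathField s γ) x = s (x - γ 0) - s (x - γ 1)) ∧
    (γ 0 = γ 1 → ∀ x, div3 (pathField s γ) x = 0) := by
  have hdiv : ∀ x, div3 (pathField s γ) x = s (x - γ 0) - s (x - γ 1) := fun x => by
    rw [div3_eq_sum_of_hasFDerivAt (hasFDerivAt_pathField hs hsc hγ x),
      sum_integral_smulRight hs hγ x]
  refine ⟨fun x => (hasFDerivAt_pathField hs hsc hγ x).differentiableAt, hdiv, ?_⟩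
  intro h x
  rw [hdiv, h, sub_self]
end

section
/- Let s : ℝ³ → ℝ be a compactly supported C¹ function, let B = [a₁,b₁] × [a₂,b₂] × [a₃,b₃] ⊂ ℝ³ be a rectangular box, and define s_B(x) = ∫_B s(x − y) dy. Then s_B is differentiable and, for i = 1 (and analogously for i = 2, 3), ∂₁ s_B(x) = ∫_{[a₂,b₂]×[a₃,b₃]} ( s(x − (a₁, y₂, y₃)) − s(x − (b₁, y₂, y₃)) ) dy₂ dy₃; that is, the gradient of the mollified indicator of the box equals the difference of the mollifier integrated over the corresponding opposite faces of the box (the inward-directed boundary surface integral). -/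
/-!
Since `fderiv ℝ s` is continuous with compact support, hence bounded, and the box has finite
measure, one may differentiate under the integral sign:
the derivative of `s_B` at `x` is `∫_B (fderiv ℝ s) (x - y) dy` (`hasFDerivAt_boxMoll`).
Evaluated at a basis vector `eᵢ`, the integrand is the divergence in `y` of the vector field
`-s (x - y) eᵢ`, so the divergence theorem on the box turns the integral into the difference of the
integrals of `s (x - ·)` over the two faces orthogonal to `eᵢ` (`integral_fderiv_box`). Fubini's
theorem on the two-dimensional face (`setIntegral_Icc_fin_two`) gives the iterated integral.
-/

open MeasureTheory

/-- The box-mollified function `s_B(x) = ∫_B s(x − y) dy` for the rectangular box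
`B = [a₁,b₁] × [a₂,b₂] × [a₃,b₃]`. -/
noncomputable def boxMoll (s : (Fin 3 → ℝ) → ℝ) (a b : Fin 3 → ℝ) (x : Fin 3 → ℝ) : ℝ :=
  ∫ y in Set.Icc a b, s (x - y)

open Set Topology

theorem hasFDerivAt_boxMoll {s : (Fin 3 → ℝ) → ℝ} (hs : ContDiff ℝ 1 s)
    (hsc : HasCompactSupport s) (a b x : Fin 3 → ℝ) :
    HasFDerivAt (boxMoll s a b) (∫ y in Icc a b, fderiv ℝ s (x - y)) x := by
  have hcont : Continuous (fderiv ℝ s) := hs.continuous_fderiv one_ne_zero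
  obtain ⟨C, hC⟩ := (hsc.fderiv (𝕜 := ℝ)).exists_bound_of_continuous hcont
  refine hasFDerivAt_integral_of_dominated_of_fderiv_le
    (F := fun x y => s (x - y)) (F' := fun x y => fderiv ℝ s (x - y))
    (bound := fun _ => C) (s := univ) Filter.univ_mem ?_ ?_ ?_ ?_ ?_ ?_
  · refine Filter.Eventually.of_forall fun z => ?_
    exact (hs.continuous.comp (continuous_const.sub continuous_id)).aestronglyMeasurable
  · exact (hs.continuous.comp
      (continuous_const.sub continuous_id)).continuousOn.integrableOn_compact isCompact_Icc
  · exact (hcont.comp (continuous_const.sub continuous_id)).aestronglyMeasurable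
  · exact Filter.Eventually.of_forall fun y z _ => hC _
  · exact continuousOn_const.integrableOn_compact isCompact_Icc
  · refine Filter.Eventually.of_forall fun y z _ => ?_
    have h := (hs.differentiable one_ne_zero (z - y)).hasFDerivAt
    simpa [Function.comp_def] using h.comp z ((hasFDerivAt_id z).sub_const y)

/-- The divergence theorem for the vector field `y ↦ -s (x - y) eᵢ` on a box in any dimension. -/
theorem integral_fderiv_box {n : ℕ} {s : (Fin (n + 1) → ℝ) → ℝ} (hs : ContDiff ℝ 1 s)
    {a b : Fin (n + 1) → ℝ} (hab : a ≤ b) (i : Fin (n + 1)) (x : Fin (n + 1) → ℝ) :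
    ∫ y in Icc a b, fderiv ℝ s (x - y) (Pi.single i 1) =
      (∫ y in Icc (a ∘ i.succAbove) (b ∘ i.succAbove), s (x - i.insertNth (a i) y)) -
        ∫ y in Icc (a ∘ i.succAbove) (b ∘ i.succAbove), s (x - i.insertNth (b i) y) := by
  have hsub : Continuous fun y : Fin (n + 1) → ℝ => x - y := continuous_const.sub continuous_id
  have hcont : Continuous fun y => fderiv ℝ s (x - y) :=
    (hs.continuous_fderiv one_ne_zero).comp hsub
  have hdiv : ∀ y, ∑ j, (if j = i then fderiv ℝ s (x - y) else 0)
      (Pi.single j (1 : ℝ)) = fderiv ℝ s (x - y) (Pi.single i 1) := by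
    intro y
    rw [Finset.sum_eq_single i]
    · simp
    · intro j _ hj
      simp [hj]
    · simp
  have key := integral_divergence_of_hasFDerivAt_off_countable' a b hab
    (fun j y => if j = i then -s (x - y) else 0)
    (fun j y => if j = i then fderiv ℝ s (x - y) else 0) ∅ countable_empty ?_ ?_ ?_
  · simp only [hdiv] at key
    rw [key, Finset.sum_eq_single i]
    · simp only [if_true, integral_neg]
      ring
    · intro j _ hj
      simp [hj]
    · simp
  · intro j
    by_cases hj : j = i
    · simp only [hj, if_true]
      exact (hs.continuous.comp hsub).neg.continuousOn
    · simpa [hj] using continuousOn_const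
  · intro y _ j
    by_cases hj : j = i
    · have h := (hs.differentiable one_ne_zero (x - y)).hasFDerivAt
      have h2 := (h.comp y ((hasFDerivAt_id y).const_sub x)).neg
      simpa [hj, Function.comp_def] using! h2
    · simpa [hj] using! hasFDerivAt_const (0 : ℝ) y
  · simp only [hdiv]
    exact (hcont.clm_apply continuous_const).continuousOn.integrableOn_compact isCompact_Icc

theorem setIntegral_Icc_fin_two {g : (Fin 2 → ℝ) → ℝ} (hg : Continuous g)
    {c d : Fin 2 → ℝ} (hcd : c ≤ d) :
    ∫ y in Icc c d, g y = ∫ u in (c 0)..(d 0), ∫ v in (c 1)..(d 1), g ![u, v] := by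
  have h := ((volume_preserving_finTwoArrow ℝ).symm _).setIntegral_preimage_emb
    (MeasurableEquiv.measurableEmbedding _) g (Icc c d)
  have hpre : (MeasurableEquiv.finTwoArrow (α := ℝ)).symm ⁻¹' Icc c d
      = Icc (c 0) (d 0) ×ˢ Icc (c 1) (d 1) := by
    rw [Icc_prod_Icc]
    exact (OrderIso.finTwoArrowIso ℝ).symm.preimage_Icc c d
  have hg2 : Continuous fun p : ℝ × ℝ => g ![p.1, p.2] := by fun_prop
  rw [← h, hpre]
  simp only [intervalIntegral.integral_of_le (hcd 0), intervalIntegral.integral_of_le (hcd 1),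
    ← setIntegral_congr_set (Ioc_ae_eq_Icc (α := ℝ) (μ := volume)).symm]
  exact setIntegral_prod (fun p : ℝ × ℝ => g ![p.1, p.2])
    (hg2.continuousOn.integrableOn_compact (isCompact_Icc.prod isCompact_Icc))

/-- The mollified indicator of a box is differentiable and its first partial derivative
is the difference of the mollifier integrated over the two opposite faces
`{a₁} × [a₂,b₂] × [a₃,b₃]` and `{b₁} × [a₂,b₂] × [a₃,b₃]` (the inward-directed boundary
surface integral); the analogous statements hold for the other coordinates. -/
theorem grad_boxMoll (s : (Fin 3 → ℝ) → ℝ) (hs : ContDiff ℝ 1 s)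
    (hsc : HasCompactSupport s) (a b : Fin 3 → ℝ) (hab : ∀ i, a i ≤ b i) :
    Differentiable ℝ (boxMoll s a b) ∧
    (∀ x, pd (boxMoll s a b) 0 x =
      ∫ y₂ in (a 1)..(b 1), ∫ y₃ in (a 2)..(b 2),
        (s (x - ![a 0, y₂, y₃]) - s (x - ![b 0, y₂, y₃]))) := by
  have hle : a ≤ b := hab
  have hderiv := hasFDerivAt_boxMoll hs hsc a b
  refine ⟨fun x => (hderiv x).differentiableAt, fun x => ?_⟩
  have hint : IntegrableOn (fun y => fderiv ℝ s (x - y)) (Icc a b) :=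
    (((hs.continuous_fderiv one_ne_zero).comp
      (continuous_const.sub continuous_id)).continuousOn.integrableOn_compact isCompact_Icc)
  have hface : ∀ t : ℝ, Continuous fun y : Fin 2 → ℝ =>
      s (x - (0 : Fin 3).insertNth (α := fun _ => ℝ) t y) := fun t =>
    hs.continuous.comp (continuous_const.sub
      (continuous_const.finInsertNth (0 : Fin 3) continuous_id))
  have hcompact : ∀ t : ℝ, IntegrableOn (fun y : Fin 2 → ℝ =>
      s (x - (0 : Fin 3).insertNth (α := fun _ => ℝ) t y))
      (Icc (a ∘ (0 : Fin 3).succAbove) (b ∘ (0 : Fin 3).succAbove)) := fun t =>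
    (hface t).continuousOn.integrableOn_compact isCompact_Icc
  rw [pd, (hderiv x).fderiv, ContinuousLinearMap.integral_apply hint,
    integral_fderiv_box hs hle 0 x, ← integral_sub (hcompact _) (hcompact _)]
  refine (setIntegral_Icc_fin_two ((hface (a 0)).sub (hface (b 0))) fun j => hab _).trans ?_
  -- The entries of `insertNth 0 t ![u, v]` and `![t, u, v]` agree, as do `succAbove 0` and `succ`.
  simp only [Pi.sub_apply, Fin.insertNth_zero']
  rfl
end

section
/- Let s : ℝ³ → ℝ be a compactly supported C¹ function, γ : [0,1] → ℝ³ a C¹ path, and g_γ(x) = ∫₀¹ s(x − γ(u)) γ'(u) du. Then for every compactly supported C¹ function s' : ℝ³ → ℝ, ∫_{ℝ³} g_γ(x) · (grad s')(x) dx = ∫_{ℝ³} s(x − γ(1)) s'(x) dx − ∫_{ℝ³} s(x − γ(0)) s'(x) dx. -/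
open MeasureTheory

/-- Gradient of a scalar function on ℝ³. -/
noncomputable def grad3 (h : (Fin 3 → ℝ) → ℝ) (x : Fin 3 → ℝ) : Fin 3 → ℝ :=
  fun i => pd h i x

/-- Euclidean inner product on ℝ³. -/
def dot3 (v w : Fin 3 → ℝ) : ℝ := ∑ i, v i * w i

theorem integral_intervalIntegral_swap_of_support (F : (Fin 3 → ℝ) → ℝ → ℝ)
    (hF : Continuous (Function.uncurry F)) (K : Set (Fin 3 → ℝ)) (hK : IsCompact K)
    (h0 : ∀ x ∉ K, ∀ u, F x u = 0) :
    ∫ x, ∫ u in (0:ℝ)..1, F x u = ∫ u in (0:ℝ)..1, ∫ x, F x u := by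
  simp only [intervalIntegral.integral_of_le zero_le_one]
  apply integral_integral_swap
  have hFK : IntegrableOn (Function.uncurry F) (K ×ˢ Set.Icc (0:ℝ) 1)
      ((volume : Measure (Fin 3 → ℝ)).prod volume) :=
    hF.continuousOn.integrableOn_compact (hK.prod isCompact_Icc)
  have hsub : IntegrableOn (Function.uncurry F) (Set.univ ×ˢ Set.Ioc (0:ℝ) 1)
      ((volume : Measure (Fin 3 → ℝ)).prod volume) := by
    refine hFK.of_forall_sdiff_eq_zero (MeasurableSet.univ.prod measurableSet_Ioc) ?_
    rintro ⟨x, u⟩ ⟨hx, hn⟩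
    refine h0 x (fun hxK => hn ⟨hxK, Set.Ioc_subset_Icc_self hx.2⟩) u
  rwa [IntegrableOn, ← Measure.prod_restrict, Measure.restrict_univ] at hsub

theorem dot3_grad3 (f : (Fin 3 → ℝ) → ℝ) (x v : Fin 3 → ℝ) :
    dot3 v (grad3 f x) = fderiv ℝ f x v := by
  conv_rhs => rw [pi_eq_sum_univ' v]
  simp [dot3, grad3, pd, map_sum]

/-- Pairing the path-smeared field `g_γ` with a gradient picks out the (smeared)
endpoint contributions of the path. -/
theorem pathField_dot_grad (s : (Fin 3 → ℝ) → ℝ) (hs : ContDiff ℝ 1 s)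
    (hsc : HasCompactSupport s) (γ : ℝ → Fin 3 → ℝ) (hγ : ContDiff ℝ 1 γ)
    (s' : (Fin 3 → ℝ) → ℝ) (hs' : ContDiff ℝ 1 s') (hs'c : HasCompactSupport s') :
    ∫ x, dot3 (pathField s γ x) (grad3 s' x) =
      (∫ x, s (x - γ 1) * s' x) - ∫ x, s (x - γ 0) * s' x := by
  have hsC : Continuous s := hs.continuous
  have hγC : Continuous γ := hγ.continuous
  have hs'C : Continuous s' := hs'.continuous
  have hγ' : Continuous (deriv γ) := hγ.continuous_deriv_one
  have hDs : Continuous (fderiv ℝ s) := hs.continuous_fderiv one_ne_zero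
  have hDs' : Continuous (fderiv ℝ s') := hs'.continuous_fderiv one_ne_zero
  have hdot : ∀ x, dot3 (pathField s γ x) (grad3 s' x) =
      ∫ u in (0:ℝ)..1, s (x - γ u) * fderiv ℝ s' x (deriv γ u) := by
    intro x
    rw [dot3_grad3, pathField, ← ContinuousLinearMap.intervalIntegral_comp_comm]
    · simp
    · exact Continuous.intervalIntegrable (by fun_prop) _ _
  have hparts : ∀ u, ∫ x, s (x - γ u) * fderiv ℝ s' x (deriv γ u) =
      ∫ x, -fderiv ℝ s (x - γ u) (deriv γ u) * s' x := by
    intro u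
    have hfd : ∀ x, fderiv ℝ (fun y => s (y - γ u)) x = fderiv ℝ s (x - γ u) :=
      fun x => fderiv_comp_sub (γ u)
    have h := integral_mul_fderiv_eq_neg_fderiv_mul_of_integrable
      (μ := (volume : Measure (Fin 3 → ℝ))) (f := fun y => s (y - γ u)) (g := s')
      (v := deriv γ u) ?_ ?_ ?_ ?_ ?_
    · simp only [hfd] at h
      rw [h, ← integral_neg]
      simp
    · simp only [hfd]
      exact Continuous.integrable_of_hasCompactSupport (by fun_prop) hs'c.mul_left
    · exact Continuous.integrable_of_hasCompactSupport (by fun_prop)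
        (hs'c.fderiv_apply ℝ _).mul_left
    · exact Continuous.integrable_of_hasCompactSupport (by fun_prop) hs'c.mul_left
    · exact fun x _ => ((hs.differentiable one_ne_zero) (x - γ u)).comp x (by fun_prop)
    · exact fun x _ => hs'.differentiable one_ne_zero x
  have hftc : ∀ x, ∫ u in (0:ℝ)..1, -fderiv ℝ s (x - γ u) (deriv γ u) * s' x =
      s (x - γ 1) * s' x - s (x - γ 0) * s' x := by
    intro x
    rw [intervalIntegral.integral_mul_const, ← sub_mul]
    congr 1
    refine intervalIntegral.integral_eq_sub_of_hasDerivAt (f := fun u => s (x - γ u)) ?_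
      (Continuous.intervalIntegrable (by fun_prop) _ _)
    intro u _
    have h1 : HasDerivAt (fun u => x - γ u) (-deriv γ u) u :=
      ((hγ.differentiable one_ne_zero) u).hasDerivAt.const_sub x
    have h2 := ((hs.differentiable one_ne_zero) (x - γ u)).hasFDerivAt.comp_hasDerivAt u h1
    simpa [Function.comp_def] using h2
  simp only [hdot]
  rw [integral_intervalIntegral_swap_of_support _ _ (tsupport s') hs'c]
  · simp only [hparts]
    rw [← integral_intervalIntegral_swap_of_support _ _ (tsupport s') hs'c]
    · simp only [hftc]
      apply integral_sub <;>
        exact Continuous.integrable_of_hasCompactSupport (by fun_prop) hs'c.mul_left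
    · intro x hx u
      simp [image_eq_zero_of_notMem_tsupport hx]
    · simp only [Function.uncurry_def]
      fun_prop
  · intro x hx u
    have : fderiv ℝ s' x = 0 :=
      image_eq_zero_of_notMem_tsupport fun h => hx (tsupport_fderiv_subset ℝ h)
    simp [this]
  · simp only [Function.uncurry_def]
    fun_prop
end

section
/- Let s, s' : ℝ³ → ℝ be compactly supported C¹ functions with ∫ s = q, ∫ s' = 1, supp s ⊆ closedBall(0, r) and supp s' ⊆ closedBall(0, r'). Let γ : [0,1] → ℝ³ be a C¹ path and g_γ(x) = ∫₀¹ s(x − γ(u)) γ'(u) du. Let B ⊂ ℝ³ be a rectangular box and s'_B(x) = ∫_B s'(x − y) dy. Assume that for each endpoint p ∈ {γ(0), γ(1)} either closedBall(p, r + r') ⊆ B (p is 'enclosed') or closedBall(p, r + r') ∩ B = ∅ (p is 'outside'). Then −∫_{ℝ³} g_γ(x) · (grad s'_B)(x) dx = q·(χ₀ − χ₁), where χ₀ = 1 if γ(0) is enclosed and 0 if it is outside, and χ₁ = 1 if γ(1) is enclosed and 0 if it is outside. In particular the smeared flux of g_γ through the boundary of B equals q if B encloses only γ(0), −q if B encloses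 only γ(1), and 0 if B encloses both endpoints or neither (Gauss' law for the smeared path field). -/
/-!
Write `F` for the box-mollified function, a `C¹` function on `ℝ³`. The integrand of the flux is
`∫₀¹ s (x - γ u) * dF_x (γ' u) du`. By Fubini and the translation `x = z + γ u` the flux integral
becomes `∫ s z * ∫₀¹ dF_{z + γ u} (γ' u) du dz`, and the inner integral is
`F (z + γ 1) - F (z + γ 0)` by the fundamental theorem of calculus
(`integral_dotE_pathFieldE`). For `z` in the support of `s`, the support hypotheses force
`F (z + p)` to be `1` if `p` is enclosed and `0` if it is outside, so each endpoint contributes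
`q` or `0` (`integral_mul_boxMollE`).
-/

open MeasureTheory Classical

/-- ℝ³ with the Euclidean norm. -/
abbrev E3 := EuclideanSpace ℝ (Fin 3)

/-- Partial derivative in the i-th coordinate direction. -/
noncomputable def pdE (f : E3 → ℝ) (i : Fin 3) (x : E3) : ℝ :=
  fderiv ℝ f x (EuclideanSpace.single i 1)

/-- Gradient of a scalar function on ℝ³. -/
noncomputable def gradE (f : E3 → ℝ) (x : E3) : E3 :=
  (WithLp.equiv 2 (Fin 3 → ℝ)).symm (fun i => pdE f i x)

/-- Euclidean inner product on ℝ³. -/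
def dotE (v w : E3) : ℝ := ∑ i, v i * w i

/-- The path-smeared vector field `g_γ(x) = ∫₀¹ s(x − γ(u)) γ'(u) du`. -/
noncomputable def pathFieldE (s : E3 → ℝ) (γ : ℝ → E3) (x : E3) : E3 :=
  ∫ u in (0:ℝ)..1, s (x - γ u) • deriv γ u

/-- The rectangular box `[a₁,b₁] × [a₂,b₂] × [a₃,b₃]` in ℝ³. -/
def boxSet (a b : Fin 3 → ℝ) : Set E3 := {x | ∀ i, a i ≤ x i ∧ x i ≤ b i}

/-- The box-mollified function `s'_B(x) = ∫_B s'(x − y) dy`. -/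
noncomputable def boxMollE (s' : E3 → ℝ) (a b : Fin 3 → ℝ) (x : E3) : ℝ :=
  ∫ y in boxSet a b, s' (x - y)

/-- The mollified box is the convolution of the constant `1` with `s'` over Lebesgue measure
restricted to the box, hence as smooth as `s'`. -/
lemma boxMollE_contDiff {s' : E3 → ℝ} (hs' : ContDiff ℝ 1 s') (hs'c : HasCompactSupport s')
    (a b : Fin 3 → ℝ) : ContDiff ℝ 1 (boxMollE s' a b) := by
  have h := hs'c.contDiff_convolution_right (n := 1) (𝕜 := ℝ) (ContinuousLinearMap.lsmul ℝ ℝ)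
    (μ := volume.restrict (boxSet a b)) (f := fun _ : E3 => (1 : ℝ)) (locallyIntegrable_const 1)
    (by exact_mod_cast hs')
  have hconv : boxMollE s' a b = convolution (fun _ : E3 => (1 : ℝ)) s'
      (ContinuousLinearMap.lsmul ℝ ℝ) (volume.restrict (boxSet a b)) := by
    ext x
    simp [boxMollE, convolution]
  rw [hconv]
  exact_mod_cast h

lemma dotE_gradE (F : E3 → ℝ) (x v : E3) : dotE v (gradE F x) = fderiv ℝ F x v := by
  have hv : v = ∑ i, v i • EuclideanSpace.single i (1 : ℝ) := by
    ext j
    fin_cases j <;> simp [Fin.sum_univ_three]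
  conv_rhs => rw [hv]
  simp [dotE, gradE, pdE]

/-- Fubini for a continuous integrand on `ℝ³ × [0,1]` supported over a compact set. -/
lemma integral_swap_of_compact {H : E3 → ℝ → ℝ} (hH : Continuous (Function.uncurry H))
    {K : Set E3} (hK : IsCompact K) (h0 : ∀ u ∈ Set.Icc (0 : ℝ) 1, ∀ x ∉ K, H x u = 0) :
    ∫ x, ∫ u in (0 : ℝ)..1, H x u = ∫ u in (0 : ℝ)..1, ∫ x, H x u := by
  simp only [intervalIntegral.integral_of_le zero_le_one]
  apply integral_integral_swap
  have h2 : IntegrableOn (Function.uncurry H) (K ×ˢ Set.Icc (0 : ℝ) 1)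
      ((volume : Measure E3).prod (volume : Measure ℝ)) :=
    hH.continuousOn.integrableOn_compact (hK.prod isCompact_Icc)
  have h3 : IntegrableOn (Function.uncurry H) (Set.univ ×ˢ Set.Ioc (0 : ℝ) 1)
      ((volume : Measure E3).prod (volume : Measure ℝ)) := by
    refine h2.of_forall_sdiff_eq_zero (MeasurableSet.univ.prod measurableSet_Ioc) ?_
    rintro ⟨x, u⟩ ⟨⟨-, hu⟩, hn⟩
    have hu' : u ∈ Set.Icc (0 : ℝ) 1 := Set.Ioc_subset_Icc_self hu
    exact h0 u hu' x fun hx => hn ⟨hx, hu'⟩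
  rwa [IntegrableOn, ← Measure.prod_restrict, Measure.restrict_univ] at h3

/-- If `s z ≠ 0` and `s' (z + p - y) ≠ 0`, then `y` lies within `r + r'` of `p`. -/
lemma mem_closedBall_of_ne_zero {s s' : E3 → ℝ} {r r' : ℝ}
    (hss : tsupport s ⊆ Metric.closedBall 0 r) (hss' : tsupport s' ⊆ Metric.closedBall 0 r')
    {z p y : E3} (hz : s z ≠ 0) (hy : s' (z + p - y) ≠ 0) :
    y ∈ Metric.closedBall p (r + r') := by
  have h1 := hss (subset_tsupport s hz)
  have h2 := hss' (subset_tsupport s' hy)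
  rw [mem_closedBall_zero_iff] at h1 h2
  rw [mem_closedBall_iff_norm]
  calc ‖y - p‖ = ‖z - (z + p - y)‖ := by congr 1; abel
    _ ≤ ‖z‖ + ‖z + p - y‖ := norm_sub_le _ _
    _ ≤ r + r' := add_le_add h1 h2

/-- The smeared charge at `p`, tested against the mollified box, is `q` or `0` according as
`p` is enclosed or outside: on the translated support of `s` the mollified box function is
constantly `1` or `0`. -/
lemma integral_mul_boxMollE {s s' : E3 → ℝ} {q r r' : ℝ}
    (hq : ∫ x, s x = q) (h1 : ∫ x, s' x = 1)
    (hss : tsupport s ⊆ Metric.closedBall 0 r) (hss' : tsupport s' ⊆ Metric.closedBall 0 r')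
    {a b : Fin 3 → ℝ} {p : E3}
    (hp : Metric.closedBall p (r + r') ⊆ boxSet a b ∨
      Metric.closedBall p (r + r') ∩ boxSet a b = ∅) :
    ∫ z, s z * boxMollE s' a b (z + p) =
      q * (if Metric.closedBall p (r + r') ⊆ boxSet a b then (1 : ℝ) else 0) := by
  rw [← hq, ← integral_mul_const]
  congr 1
  ext z
  by_cases hz : s z = 0
  · simp [hz]
  congr 1
  split_ifs with hC
  · rw [boxMollE, setIntegral_eq_integral_of_forall_compl_eq_zero, integral_sub_left_eq_self, h1]
    intro y hy
    by_contra hne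
    exact hy (hC (mem_closedBall_of_ne_zero hss hss' hz hne))
  · rw [boxMollE]
    apply setIntegral_eq_zero_of_forall_eq_zero
    intro y hy
    by_contra hne
    have hmem : y ∈ Metric.closedBall p (r + r') ∩ boxSet a b :=
      ⟨mem_closedBall_of_ne_zero hss hss' hz hne, hy⟩
    rw [hp.resolve_left hC] at hmem
    exact hmem

/-- The flux integral reduces to the endpoints: translating by `γ u` turns the integrand into
`s z` times the `u`-derivative of `F (z + γ u)`. -/
lemma integral_dotE_pathFieldE {s F : E3 → ℝ} (hs : Continuous s) (hsc : HasCompactSupport s)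
    (hF : ContDiff ℝ 1 F) {γ : ℝ → E3} (hγ : ContDiff ℝ 1 γ) :
    ∫ x, dotE (pathFieldE s γ x) (gradE F x) =
      (∫ z, s z * F (z + γ 1)) - ∫ z, s z * F (z + γ 0) := by
  have hγc : Continuous γ := hγ.continuous
  have hγ' : Continuous (deriv γ) := hγ.continuous_deriv le_rfl
  have hF' : Continuous (fderiv ℝ F) := hF.continuous_fderiv one_ne_zero
  have hFc : Continuous F := hF.continuous
  have hpt : ∀ x, dotE (pathFieldE s γ x) (gradE F x) =
      ∫ u in (0 : ℝ)..1, s (x - γ u) * fderiv ℝ F x (deriv γ u) := by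
    intro x
    rw [dotE_gradE, pathFieldE, ← ContinuousLinearMap.intervalIntegral_comp_comm]
    · simp
    · exact Continuous.intervalIntegrable (by fun_prop) _ _
  have hcpt : IsCompact (Set.image (fun w : E3 × ℝ => w.1 + γ w.2)
      (tsupport s ×ˢ Set.Icc (0 : ℝ) 1)) :=
    (IsCompact.prod hsc isCompact_Icc).image (by fun_prop)
  have hint : ∀ p, Integrable fun z => s z * F (z + p) := fun p =>
    Continuous.integrable_of_hasCompactSupport (by fun_prop) hsc.mul_right
  have hftc : ∀ z, ∫ u in (0 : ℝ)..1, s z * fderiv ℝ F (z + γ u) (deriv γ u) =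
      s z * F (z + γ 1) - s z * F (z + γ 0) := by
    intro z
    rw [intervalIntegral.integral_const_mul, ← mul_sub]
    congr 1
    refine intervalIntegral.integral_eq_sub_of_hasDerivAt (f := fun u => F (z + γ u)) ?_ ?_
    · intro u _
      have h1 : HasDerivAt (fun u => z + γ u) (deriv γ u) u :=
        ((hγ.differentiable one_ne_zero) u).hasDerivAt.const_add z
      exact ((hF.differentiable one_ne_zero) (z + γ u)).hasFDerivAt.comp_hasDerivAt u h1
    · exact Continuous.intervalIntegrable (by fun_prop) _ _
  calc ∫ x, dotE (pathFieldE s γ x) (gradE F x)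
      = ∫ x, ∫ u in (0 : ℝ)..1, s (x - γ u) * fderiv ℝ F x (deriv γ u) := by simp only [hpt]
    _ = ∫ u in (0 : ℝ)..1, ∫ x, s (x - γ u) * fderiv ℝ F x (deriv γ u) := by
        refine integral_swap_of_compact (by unfold Function.uncurry; fun_prop) hcpt ?_
        intro u hu x hx
        have hnot : x - γ u ∉ tsupport s := fun h => hx ⟨(x - γ u, u), ⟨h, hu⟩, by simp⟩
        rw [image_eq_zero_of_notMem_tsupport hnot, zero_mul]
    _ = ∫ u in (0 : ℝ)..1, ∫ z, s z * fderiv ℝ F (z + γ u) (deriv γ u) := by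
        congr 1
        ext u
        rw [← integral_add_right_eq_self _ (γ u)]
        simp
    _ = ∫ z, ∫ u in (0 : ℝ)..1, s z * fderiv ℝ F (z + γ u) (deriv γ u) := by
        refine (integral_swap_of_compact (by unfold Function.uncurry; fun_prop) hsc ?_).symm
        intro u _ z hz
        rw [image_eq_zero_of_notMem_tsupport hz, zero_mul]
    _ = _ := by
        simp only [hftc]
        exact integral_sub (hint _) (hint _)

/-- Gauss' law for the smeared path field: the smeared flux of `g_γ` through the
boundary of a box `B` equals `q` times (1 if `γ(0)` is enclosed, else 0) minus
(1 if `γ(1)` is enclosed, else 0), provided each endpoint is either enclosed in or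
outside of `B` at mollification distance `r + r'`. -/
theorem gauss_law_pathField (s s' : E3 → ℝ) (q r r' : ℝ)
    (hs : ContDiff ℝ 1 s) (hsc : HasCompactSupport s)
    (hs' : ContDiff ℝ 1 s') (hs'c : HasCompactSupport s')
    (hq : ∫ x, s x = q) (h1 : ∫ x, s' x = 1)
    (hss : tsupport s ⊆ Metric.closedBall 0 r)
    (hss' : tsupport s' ⊆ Metric.closedBall 0 r')
    (γ : ℝ → E3) (hγ : ContDiff ℝ 1 γ)
    (a b : Fin 3 → ℝ) (hab : ∀ i, a i ≤ b i)
    (h0 : Metric.closedBall (γ 0) (r + r') ⊆ boxSet a b ∨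
          Metric.closedBall (γ 0) (r + r') ∩ boxSet a b = ∅)
    (h1' : Metric.closedBall (γ 1) (r + r') ⊆ boxSet a b ∨
           Metric.closedBall (γ 1) (r + r') ∩ boxSet a b = ∅) :
    -(∫ x, dotE (pathFieldE s γ x) (gradE (boxMollE s' a b) x)) =
      q * ((if Metric.closedBall (γ 0) (r + r') ⊆ boxSet a b then (1:ℝ) else 0) -
           (if Metric.closedBall (γ 1) (r + r') ⊆ boxSet a b then (1:ℝ) else 0)) := by
  rw [integral_dotE_pathFieldE hs.continuous hsc (boxMollE_contDiff hs' hs'c a b) hγ,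
    integral_mul_boxMollE hq h1 hss hss' h0, integral_mul_boxMollE hq h1 hss hss' h1']
  ring
end

section
/- Let x₁, x₂ ∈ ℝ³, let γ₀ : [0,1] → ℝ³ be a smooth path with γ₀(0) = x₁, γ₀(1) = x₂, satisfying |γ₀(u) − xᵢ| ≥ R·u(1−u) for all u ∈ (0,1), i = 1,2, for some R > 0. Let s : ℝ³ → ℝ be smooth with supp s ⊆ closedBall(0, R') for some R' < R. For 0 < ε < 1/2 define b_ε : ℝ³ → ℝ³ by b_ε(x) = ∫_ε^{1−ε} (u(1−u))^{−3} s( (x − γ₀(u)) / (u(1−u)) ) · ( γ₀'(u) + (1−2u)(x − γ₀(u))/(u(1−u)) ) du. Then b_ε is a smooth compactly supported vector field, and there are open neighborhoods of x₁ and of x₂ on which b_ε vanishes identically. -/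
/-!
The integrand of `bridgeField` is jointly smooth in `(x, u)` near every point of
`ℝ³ × [ε, 1 - ε]`, because `u (1 - u)` does not vanish there. Differentiating under the integral
sign arbitrarily often (`contDiff_intervalIntegral`) makes the field smooth.

A nonzero value at `x` forces some `u ∈ [ε, 1 - ε]` with `(x - γ₀ u) / (u (1 - u))` in the support
of `s`, so `x` lies in the compact tube `bridgeTube`, the union of the closed balls of radius
`R' u (1 - u)` around `γ₀ u`. This gives compact support. The separation hypothesis and `R' < R`
put both endpoints outside the tube, whose complement is open and serves as the neighborhood.
-/

open MeasureTheory

/-- The approximating gauge-bridge field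
`b_ε(x) = ∫_ε^{1−ε} (u(1−u))⁻³ s((x − γ₀(u))/(u(1−u)))
            (γ₀'(u) + (1−2u)(x − γ₀(u))/(u(1−u))) du`. -/
noncomputable def bridgeField (γ₀ : ℝ → E3) (s : E3 → ℝ) (ε : ℝ) (x : E3) : E3 :=
  ∫ u in ε..(1 - ε),
    (s ((u * (1 - u))⁻¹ • (x - γ₀ u)) / (u * (1 - u)) ^ 3) •
      (deriv γ₀ u + ((1 - 2 * u) * (u * (1 - u))⁻¹) • (x - γ₀ u))

/-- Differentiation under the integral sign over a compact interval. The derivative of the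
integrand in `x` is written as the joint derivative precomposed with `inl`, so that it is visibly
jointly smooth again and the lemma can be iterated. -/
theorem hasFDerivAt_intervalIntegral {E V : Type} [NormedAddCommGroup E] [NormedSpace ℝ E]
    [FiniteDimensional ℝ E] [NormedAddCommGroup V] [NormedSpace ℝ V]
    {a b : ℝ} (F : E × ℝ → V)
    (hF : ∀ x, ∀ u ∈ Set.uIcc a b, ContDiffAt ℝ (⊤ : ℕ∞) F (x, u)) (x₀ : E) :
    HasFDerivAt (fun x => ∫ u in a..b, F (x, u))
      (∫ u in a..b, (fderiv ℝ F (x₀, u)).comp (ContinuousLinearMap.inl ℝ E ℝ)) x₀ := by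
  have hF' : ∀ x, ∀ u ∈ Set.uIcc a b, ContinuousAt
      (fun p => (fderiv ℝ F p).comp (ContinuousLinearMap.inl ℝ E ℝ)) (x, u) := fun x u hu =>
    (((hF x u hu).fderiv_right (m := 0) (by simp)).continuousAt).clm_comp continuousAt_const
  have hc : ∀ x, ContinuousOn (fun u => F (x, u)) (Set.uIcc a b) := fun x u hu =>
    (ContinuousAt.comp (f := fun u => (x, u)) (hF x u hu).continuousAt
      (by fun_prop)).continuousWithinAt
  have hc' : ContinuousOn
      (fun u => (fderiv ℝ F (x₀, u)).comp (ContinuousLinearMap.inl ℝ E ℝ)) (Set.uIcc a b) :=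
    fun u hu => (ContinuousAt.comp (f := fun u => (x₀, u)) (hF' x₀ u hu)
      (by fun_prop)).continuousWithinAt
  -- A uniform bound for the derivative near `x₀`, by compactness of `closedBall x₀ 1 × [a, b]`.
  obtain ⟨C, hC⟩ := ((isCompact_closedBall x₀ 1).prod
    (isCompact_uIcc (a := a) (b := b))).exists_bound_of_continuousOn
      (f := fun p => (fderiv ℝ F p).comp (ContinuousLinearMap.inl ℝ E ℝ))
      (fun p hp => (hF' p.1 p.2 hp.2).continuousWithinAt)
  refine intervalIntegral.hasFDerivAt_integral_of_dominated_of_fderiv_le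
    (F := fun x u => F (x, u))
    (F' := fun x u => (fderiv ℝ F (x, u)).comp (ContinuousLinearMap.inl ℝ E ℝ))
    (bound := fun _ => C)
    (Metric.closedBall_mem_nhds x₀ one_pos) ?_ ?_ ?_ ?_ ?_ ?_
  · exact Filter.Eventually.of_forall fun x =>
      ((hc x).mono Set.uIoc_subset_uIcc).aestronglyMeasurable measurableSet_uIoc
  · exact (hc x₀).intervalIntegrable
  · exact (hc'.mono Set.uIoc_subset_uIcc).aestronglyMeasurable measurableSet_uIoc
  · exact Filter.Eventually.of_forall fun u hu x hx =>
      hC (x, u) ⟨hx, Set.uIoc_subset_uIcc hu⟩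
  · exact intervalIntegrable_const
  · refine Filter.Eventually.of_forall fun u hu x _ => ?_
    have h := ((hF x u (Set.uIoc_subset_uIcc hu)).differentiableAt (by simp)).hasFDerivAt
    exact HasFDerivAt.comp x h (hasFDerivAt_prodMk_left x u)

theorem contDiff_intervalIntegral {E V : Type} [NormedAddCommGroup E] [NormedSpace ℝ E]
    [FiniteDimensional ℝ E] [NormedAddCommGroup V] [NormedSpace ℝ V]
    {a b : ℝ} (F : E × ℝ → V)
    (hF : ∀ x, ∀ u ∈ Set.uIcc a b, ContDiffAt ℝ (⊤ : ℕ∞) F (x, u)) :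
    ContDiff ℝ (⊤ : ℕ∞) (fun x => ∫ u in a..b, F (x, u)) := by
  refine contDiff_infty.2 fun n => ?_
  -- The target space changes to `E →L[ℝ] V` in the induction step.
  induction n generalizing V with
  | zero =>
    exact contDiff_zero.2 (continuous_iff_continuousAt.2 fun x =>
      (hasFDerivAt_intervalIntegral F hF x).continuousAt)
  | succ n ih =>
    push_cast
    refine contDiff_succ_iff_fderiv.2
      ⟨fun x => (hasFDerivAt_intervalIntegral F hF x).differentiableAt, by simp, ?_⟩
    rw [funext fun x => (hasFDerivAt_intervalIntegral F hF x).fderiv]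
    exact ih (fun p => (fderiv ℝ F p).comp (ContinuousLinearMap.inl ℝ E ℝ)) fun x u hu =>
      ((hF x u hu).fderiv_right (m := (⊤ : ℕ∞)) (by simp)).clm_comp contDiffAt_const

/-- The union over `u ∈ [ε, 1 - ε]` of the closed balls of radius `r u (1 - u)` around `γ₀ u`,
written as the image of `[ε, 1 - ε] × closedBall 0 r`. -/
def bridgeTube (γ₀ : ℝ → E3) (r ε : ℝ) : Set E3 :=
  (fun q : ℝ × E3 => γ₀ q.1 + (q.1 * (1 - q.1)) • q.2) ''
    (Set.Icc ε (1 - ε) ×ˢ Metric.closedBall 0 r)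

theorem isCompact_bridgeTube {γ₀ : ℝ → E3} (hγ : Continuous γ₀) (r ε : ℝ) :
    IsCompact (bridgeTube γ₀ r ε) :=
  (isCompact_Icc.prod (isCompact_closedBall _ _)).image (by fun_prop)

theorem bridgeField_eq_zero_of_notMem_tube {γ₀ : ℝ → E3} {s : E3 → ℝ} {r ε : ℝ}
    (hss : tsupport s ⊆ Metric.closedBall 0 r) (hε0 : 0 < ε) (hε : ε < 1 / 2) {x : E3}
    (hx : x ∉ bridgeTube γ₀ r ε) : bridgeField γ₀ s ε x = 0 := by
  unfold bridgeField
  refine intervalIntegral.integral_zero_ae (Filter.Eventually.of_forall fun u hu => ?_)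
  rw [Set.uIoc_of_le (by linarith)] at hu
  have hpos : 0 < u * (1 - u) := mul_pos (by linarith [hu.1]) (by linarith [hu.2])
  have h0 : s ((u * (1 - u))⁻¹ • (x - γ₀ u)) = 0 := by
    by_contra hne
    refine hx ⟨(u, (u * (1 - u))⁻¹ • (x - γ₀ u)),
      ⟨⟨hu.1.le, hu.2⟩, hss (subset_tsupport s hne)⟩, ?_⟩
    simp only [smul_inv_smul₀ hpos.ne', add_sub_cancel]
  rw [h0, zero_div, zero_smul]

theorem notMem_bridgeTube {γ₀ : ℝ → E3} {R r ε : ℝ} (hr : r < R) (hε0 : 0 < ε) {p : E3}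
    (hsep : ∀ u ∈ Set.Ioo (0 : ℝ) 1, R * (u * (1 - u)) ≤ ‖γ₀ u - p‖) :
    p ∉ bridgeTube γ₀ r ε := by
  rintro ⟨⟨u, y⟩, ⟨hu, hy⟩, rfl⟩
  have hu0 : 0 < u := hε0.trans_le hu.1
  have hu1 : u < 1 := by linarith [hu.2]
  have hpos : 0 < u * (1 - u) := mul_pos hu0 (by linarith)
  have h := hsep u ⟨hu0, hu1⟩
  have hy' : ‖y‖ ≤ r := by simpa using hy
  simp only [sub_add_cancel_left, norm_neg, norm_smul, Real.norm_of_nonneg hpos.le] at h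
  nlinarith

theorem contDiff_bridgeField {γ₀ : ℝ → E3} (hγ : ContDiff ℝ (⊤ : ℕ∞) γ₀) {s : E3 → ℝ}
    (hs : ContDiff ℝ (⊤ : ℕ∞) s) {ε : ℝ} (hε0 : 0 < ε) (hε : ε < 1 / 2) :
    ContDiff ℝ (⊤ : ℕ∞) (bridgeField γ₀ s ε) := by
  refine contDiff_intervalIntegral (fun p : E3 × ℝ =>
    (s ((p.2 * (1 - p.2))⁻¹ • (p.1 - γ₀ p.2)) / (p.2 * (1 - p.2)) ^ 3) •
      (deriv γ₀ p.2 + ((1 - 2 * p.2) * (p.2 * (1 - p.2))⁻¹) • (p.1 - γ₀ p.2))) fun x u hu => ?_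
  rw [Set.uIcc_of_le (by linarith)] at hu
  have hpos : 0 < u * (1 - u) := mul_pos (by linarith [hu.1]) (by linarith [hu.2])
  have hγ' : ContDiff ℝ (⊤ : ℕ∞) (deriv γ₀) := (contDiff_infty_iff_deriv.1 hγ).2
  have h1 : ContDiffAt ℝ (⊤ : ℕ∞) (fun p : E3 × ℝ => p.2 * (1 - p.2)) (x, u) := by fun_prop
  have h2 : ContDiffAt ℝ (⊤ : ℕ∞) (fun p : E3 × ℝ => (p.2 * (1 - p.2))⁻¹) (x, u) :=
    h1.inv hpos.ne'
  have h3 : ContDiffAt ℝ (⊤ : ℕ∞) (fun p : E3 × ℝ => p.1 - γ₀ p.2) (x, u) := by fun_prop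
  have h4 : ContDiffAt ℝ (⊤ : ℕ∞)
      (fun p : E3 × ℝ => s ((p.2 * (1 - p.2))⁻¹ • (p.1 - γ₀ p.2))) (x, u) :=
    hs.contDiffAt.comp _ (h2.smul h3)
  have h5 : ContDiffAt ℝ (⊤ : ℕ∞) (fun p : E3 × ℝ => 1 - 2 * p.2) (x, u) := by fun_prop
  have h6 : ContDiffAt ℝ (⊤ : ℕ∞) (fun p : E3 × ℝ => deriv γ₀ p.2) (x, u) := by fun_prop
  exact (h4.div (h1.pow 3) (pow_pos hpos 3).ne').smul (h6.add ((h5.mul h2).smul h3))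

/-- If the smooth path `γ₀` from `x₁` to `x₂` stays at distance `≥ R u(1−u)` from the
endpoints and the smooth mollifier `s` is supported in a ball of radius `R' < R`, then
for `0 < ε < 1/2` the field `b_ε` is a smooth compactly supported vector field which
vanishes identically on open neighborhoods of `x₁` and of `x₂`. -/
theorem bridgeField_smooth_vanishes_near_charges (x₁ x₂ : E3) (γ₀ : ℝ → E3)
    (hγ : ContDiff ℝ (⊤ : ℕ∞) γ₀) (hγ0 : γ₀ 0 = x₁) (hγ1 : γ₀ 1 = x₂)
    (R R' : ℝ) (hR : 0 < R) (hR' : R' < R)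
    (hsep : ∀ u ∈ Set.Ioo (0:ℝ) 1, ∀ p ∈ ({x₁, x₂} : Set E3),
      R * (u * (1 - u)) ≤ ‖γ₀ u - p‖)
    (s : E3 → ℝ) (hs : ContDiff ℝ (⊤ : ℕ∞) s) (hss : tsupport s ⊆ Metric.closedBall 0 R')
    (ε : ℝ) (hε0 : 0 < ε) (hε : ε < 1 / 2) :
    ContDiff ℝ (⊤ : ℕ∞) (bridgeField γ₀ s ε) ∧
    HasCompactSupport (bridgeField γ₀ s ε) ∧
    (∃ U : Set E3, IsOpen U ∧ x₁ ∈ U ∧ ∀ x ∈ U, bridgeField γ₀ s ε x = 0) ∧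
    (∃ U : Set E3, IsOpen U ∧ x₂ ∈ U ∧ ∀ x ∈ U, bridgeField γ₀ s ε x = 0) := by
  have hK := isCompact_bridgeTube hγ.continuous R' ε
  have hzero : ∀ x ∉ bridgeTube γ₀ R' ε, bridgeField γ₀ s ε x = 0 := fun x hx =>
    bridgeField_eq_zero_of_notMem_tube hss hε0 hε hx
  exact ⟨contDiff_bridgeField hγ hs hε0 hε, HasCompactSupport.intro hK hzero,
    ⟨_, hK.isClosed.isOpen_compl,
      notMem_bridgeTube hR' hε0 fun u hu => hsep u hu x₁ (by simp), hzero⟩,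
    ⟨_, hK.isClosed.isOpen_compl,
      notMem_bridgeTube hR' hε0 fun u hu => hsep u hu x₂ (by simp), hzero⟩⟩
end

section
/- Let x₁, x₂ ∈ ℝ³, let γ₀ : [0,1] → ℝ³ be a C¹ path with γ₀(0) = x₁, γ₀(1) = x₂, and γ_y(u) = γ₀(u) + u(1−u)y. Let s : ℝ³ → ℝ be a compactly supported continuous function with supp s ⊆ closedBall(0, M), and for 0 < ε < 1/2 define ⟨b_ε, g⟩ = ∫_ε^{1−ε} ∫_{ℝ³} s(y) g(γ_y(u)) · (γ₀'(u) + (1−2u)y) dy du. Let g : ℝ³ → ℝ³ be continuous and suppose there is δ > 0 such that g vanishes on ball(x₁, δ) and on ball(x₂, δ). Then there exists ε₀ ∈ (0, 1/2) such that ⟨b_ε, g⟩ = ⟨b_{ε₀}, g⟩ for all 0 < ε ≤ ε₀; in particular lim_{ε→0} ⟨b_ε, g⟩ exists and equals ⟨b_{ε₀}, g⟩. (The gauge-bridge pairing with observables supported away from the charges stabilizes for small ε.) -/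
/-!
The inner integral over `y` vanishes for every `u` close to `0` or `1`. Indeed `u(1-u)y` tends to
`0` there uniformly in `y ∈ supp s`, since the support is bounded, so `γ_y(u)` enters the `δ`-ball
around the corresponding endpoint, where `g = 0` (`eventually_inner_integral_eq_zero`). Shrinking
`ε` below a suitable `ε₀` thus only adds to the `u`-integral a region where the integrand is
identically zero. This comparison of set integrals needs no integrability of the integrand.
-/

open MeasureTheory Filter

/-- The gauge-bridge pairing
`⟨b_ε, g⟩ = ∫_ε^{1−ε} ∫ s(y) g(γ_y(u)) · (γ₀'(u) + (1−2u)y) dy du`,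
where `γ_y(u) = γ₀(u) + u(1−u)y`. -/
noncomputable def bridgePairE (γ₀ : ℝ → E3) (s : E3 → ℝ) (ε : ℝ) (g : E3 → E3) : ℝ :=
  ∫ u in ε..(1 - ε),
    ∫ y, s y * dotE (g (γ₀ u + (u * (1 - u)) • y)) (deriv γ₀ u + (1 - 2 * u) • y)

/-- Near a parameter `c` with `c(1-c) = 0`, all bridge paths `γ_y`, `y ∈ supp s`, lie in the ball
around `γ₀ c` on which `g` vanishes, so the inner integral is zero. -/
theorem eventually_inner_integral_eq_zero {γ₀ : ℝ → E3} (hγ : Continuous γ₀) {s : E3 → ℝ} {M : ℝ}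
    (hss : tsupport s ⊆ Metric.closedBall 0 M) {g : E3 → E3} {δ : ℝ} (hδ : 0 < δ) {c : ℝ}
    (hc : c * (1 - c) = 0) (hg : ∀ x ∈ Metric.ball (γ₀ c) δ, g x = 0) :
    ∀ᶠ u in nhds c,
      ∫ y, s y * dotE (g (γ₀ u + (u * (1 - u)) • y)) (deriv γ₀ u + (1 - 2 * u) • y) = 0 := by
  have hcont : Continuous fun u : ℝ => ‖γ₀ u - γ₀ c‖ + |u * (1 - u)| * M := by fun_prop
  have hev : ∀ᶠ u in nhds c, ‖γ₀ u - γ₀ c‖ + |u * (1 - u)| * M < δ :=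
    hcont.continuousAt.eventually_lt continuousAt_const (by simpa [hc] using hδ)
  filter_upwards [hev] with u hu
  refine integral_eq_zero_of_ae (Eventually.of_forall fun y => ?_)
  by_cases hy : s y = 0
  · simp [hy]
  · have hyM : ‖y‖ ≤ M := by simpa using hss (subset_tsupport s hy)
    have hball : γ₀ u + (u * (1 - u)) • y ∈ Metric.ball (γ₀ c) δ := by
      rw [Metric.mem_ball, dist_eq_norm]
      calc ‖γ₀ u + (u * (1 - u)) • y - γ₀ c‖
          = ‖(γ₀ u - γ₀ c) + (u * (1 - u)) • y‖ := by congr 1; abel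
        _ ≤ ‖γ₀ u - γ₀ c‖ + |u * (1 - u)| * ‖y‖ := by
          simpa [norm_smul] using norm_add_le (γ₀ u - γ₀ c) ((u * (1 - u)) • y)
        _ ≤ ‖γ₀ u - γ₀ c‖ + |u * (1 - u)| * M := by gcongr
        _ < δ := hu
    simp [hg _ hball, dotE]

/-- The gauge-bridge pairing with observables supported away from the charges
stabilizes for small `ε`: if the continuous field `g` vanishes on balls around the
two endpoints `x₁, x₂` of the bridge, then `⟨b_ε, g⟩` is constant for `ε ≤ ε₀`;
in particular `lim_{ε→0} ⟨b_ε, g⟩` exists and equals `⟨b_{ε₀}, g⟩`. -/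
theorem bridgePair_stabilizes (x₁ x₂ : E3) (γ₀ : ℝ → E3) (hγ : ContDiff ℝ 1 γ₀)
    (hγ0 : γ₀ 0 = x₁) (hγ1 : γ₀ 1 = x₂)
    (s : E3 → ℝ) (hs : Continuous s) (hsc : HasCompactSupport s)
    (M : ℝ) (hss : tsupport s ⊆ Metric.closedBall 0 M)
    (g : E3 → E3) (hg : Continuous g) (δ : ℝ) (hδ : 0 < δ)
    (hg1 : ∀ x ∈ Metric.ball x₁ δ, g x = 0)
    (hg2 : ∀ x ∈ Metric.ball x₂ δ, g x = 0) :
    ∃ ε₀ : ℝ, 0 < ε₀ ∧ ε₀ < 1 / 2 ∧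
      (∀ ε : ℝ, 0 < ε → ε ≤ ε₀ → bridgePairE γ₀ s ε g = bridgePairE γ₀ s ε₀ g) ∧
      Tendsto (fun ε => bridgePairE γ₀ s ε g) (nhdsWithin 0 (Set.Ioi 0))
        (nhds (bridgePairE γ₀ s ε₀ g)) := by
  subst hγ0 hγ1
  obtain ⟨r₁, hr₁, h₁⟩ := Metric.eventually_nhds_iff.1
    (eventually_inner_integral_eq_zero hγ.continuous hss hδ (by norm_num) hg1)
  obtain ⟨r₂, hr₂, h₂⟩ := Metric.eventually_nhds_iff.1
    (eventually_inner_integral_eq_zero hγ.continuous hss hδ (by norm_num) hg2)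
  obtain ⟨ε₀, hpos, hlt⟩ := exists_between (lt_min (lt_min hr₁ hr₂) (by norm_num : (0 : ℝ) < 1 / 2))
  simp only [lt_min_iff] at hlt
  obtain ⟨⟨hε₁, hε₂⟩, hhalf⟩ := hlt
  have hconst : ∀ ε : ℝ, 0 < ε → ε ≤ ε₀ → bridgePairE γ₀ s ε g = bridgePairE γ₀ s ε₀ g := by
    intro ε hε hle
    unfold bridgePairE
    rw [intervalIntegral.integral_of_le (by linarith), intervalIntegral.integral_of_le (by linarith)]
    refine setIntegral_eq_of_subset_of_forall_sdiff_eq_zero measurableSet_Ioc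
      (Set.Ioc_subset_Ioc hle (by linarith)) ?_
    rintro u ⟨⟨hu₁, hu₂⟩, hu⟩
    rcases le_or_gt u ε₀ with h | h
    · refine h₁ ?_
      rw [Real.dist_eq, abs_lt]
      constructor <;> linarith
    · have h' : 1 - ε₀ < u := not_le.1 fun h' => hu ⟨h, h'⟩
      refine h₂ ?_
      rw [Real.dist_eq, abs_lt]
      constructor <;> linarith
  refine ⟨ε₀, hpos, hhalf, hconst, tendsto_const_nhds.congr' ?_⟩
  filter_upwards [Ioc_mem_nhdsGT hpos] with ε hε
  exact (hconst ε hε.1 hε.2).symm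
end

section
/- Let x₁, x₂ ∈ ℝ³, let γ₀ : [0,1] → ℝ³ be a continuous path with γ₀(0) = x₁, γ₀(1) = x₂, and let s : ℝ³ → ℝ be continuous with supp s ⊆ closedBall(0, M). For 0 < ε < 1/2 define b_ε : ℝ³ → ℝ³ by b_ε(x) = ∫_ε^{1−ε} (u(1−u))^{−3} s( (x − γ₀(u))/(u(1−u)) ) · ( γ₀'(u) + (1−2u)(x − γ₀(u))/(u(1−u)) ) du (assuming γ₀ is C¹). Then for every compact set K ⊂ ℝ³ with x₁ ∉ K and x₂ ∉ K there exists ε₀ ∈ (0, 1/2) such that b_ε(x) = b_{ε₀}(x) for all x ∈ K and all 0 < ε ≤ ε₀. (Hence the gauge-bridge field b₀ = lim b_ε is, on any compact subset of ℝ³ \ {x₁, x₂}, given by one of the smooth fields b_{ε₀}.) -/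
/-!
At `u ∈ (0, 1)` the integrand of `bridgeField γ₀ s ε x` can be nonzero only if
`‖x - γ₀ u‖ ≤ M u (1 - u)`. As `u` tends to an endpoint `0` or `1`, the right side tends to `0`
while `γ₀ u` tends to `x₁` or `x₂`, which has positive distance from `K`. Hence the
integrand vanishes for all `x ∈ K` and all `u` close enough to the endpoints
(`eventually_forall_lt_norm_sub`), and shrinking `ε` only adds points where it is zero.
-/

open MeasureTheory

/-- Near an endpoint `u₀` of the bridge, no point of `K` lies in the ball of radius
`M |u (1 - u)|` around `γ u`, the region reached by the rescaled support of `s`. -/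
theorem eventually_forall_lt_norm_sub {γ : ℝ → E3} (hγ : Continuous γ) {K : Set E3}
    (hK : IsCompact K) (M u₀ : ℝ) (hu₀ : u₀ * (1 - u₀) = 0) (hx : γ u₀ ∉ K) :
    ∀ᶠ u in nhds u₀, ∀ x ∈ K, M * |u * (1 - u)| < ‖x - γ u‖ := by
  obtain ⟨δ, hδ, hball⟩ := Metric.isOpen_iff.1 hK.isClosed.isOpen_compl (γ u₀) hx
  have hcont : Continuous fun u : ℝ => M * |u * (1 - u)| + ‖γ u - γ u₀‖ := by fun_prop
  have hlt : M * |u₀ * (1 - u₀)| + ‖γ u₀ - γ u₀‖ < δ := by simpa [hu₀] using hδ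
  filter_upwards [hcont.continuousAt.eventually_lt_const hlt] with u hu x hxK
  have hfar : δ ≤ ‖x - γ u₀‖ := by
    by_contra! h
    exact hball (by simpa [dist_eq_norm] using h) hxK
  have htri : ‖x - γ u₀‖ ≤ ‖x - γ u‖ + ‖γ u - γ u₀‖ := by
    simpa using norm_add_le (x - γ u) (γ u - γ u₀)
  linarith

theorem bridge_cutoff_eq_zero {s : E3 → ℝ} {M : ℝ}
    (hss : tsupport s ⊆ Metric.closedBall 0 M) {t : ℝ} (ht : t ≠ 0) {y : E3}
    (h : M * |t| < ‖y‖) : s (t⁻¹ • y) = 0 := by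
  by_contra hne
  have hmem := hss (subset_tsupport s hne)
  rw [mem_closedBall_zero_iff, norm_smul, norm_inv, Real.norm_eq_abs,
    inv_mul_le_iff₀ (abs_pos.2 ht)] at hmem
  linarith

/-- On every compact set avoiding the two charge locations, the gauge-bridge fields
`b_ε` stabilize for small `ε`: hence the limit field `b₀ = lim b_ε` is, on any compact
subset of `ℝ³ \ {x₁, x₂}`, given by one of the smooth fields `b_{ε₀}`. -/
theorem bridgeField_stabilizes_on_compacts (x₁ x₂ : E3) (γ₀ : ℝ → E3)
    (hγ : ContDiff ℝ 1 γ₀) (hγ0 : γ₀ 0 = x₁) (hγ1 : γ₀ 1 = x₂)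
    (s : E3 → ℝ) (hs : Continuous s) (M : ℝ)
    (hss : tsupport s ⊆ Metric.closedBall 0 M) :
    ∀ K : Set E3, IsCompact K → x₁ ∉ K → x₂ ∉ K →
      ∃ ε₀ : ℝ, 0 < ε₀ ∧ ε₀ < 1 / 2 ∧
        ∀ x ∈ K, ∀ ε : ℝ, 0 < ε → ε ≤ ε₀ →
          bridgeField γ₀ s ε x = bridgeField γ₀ s ε₀ x := by
  intro K hK hx₁ hx₂
  have h0 := eventually_forall_lt_norm_sub hγ.continuous hK M 0 (by simp) (by rwa [hγ0])
  have h1 := eventually_forall_lt_norm_sub hγ.continuous hK M 1 (by simp) (by rwa [hγ1])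
  obtain ⟨δ₀, hδ₀, H0⟩ := Metric.eventually_nhds_iff.1 h0
  obtain ⟨δ₁, hδ₁, H1⟩ := Metric.eventually_nhds_iff.1 h1
  obtain ⟨ε₀, hε₀, hlt⟩ := exists_between
    (show (0 : ℝ) < min (min δ₀ δ₁) (1 / 2) from lt_min (lt_min hδ₀ hδ₁) (by norm_num))
  simp only [lt_min_iff] at hlt
  obtain ⟨⟨hlt₀, hlt₁⟩, hhalf⟩ := hlt
  refine ⟨ε₀, hε₀, hhalf, fun x hx ε hε hle => ?_⟩
  unfold bridgeField
  rw [intervalIntegral.integral_of_le (by linarith), intervalIntegral.integral_of_le (by linarith)]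
  -- The integrand vanishes on the difference, so no integrability is needed.
  refine setIntegral_eq_of_subset_of_forall_sdiff_eq_zero measurableSet_Ioc
    (Set.Ioc_subset_Ioc hle (by linarith)) fun u hu => ?_
  obtain ⟨⟨hu1, hu2⟩, hu3⟩ := hu
  have hfar : M * |u * (1 - u)| < ‖x - γ₀ u‖ := by
    by_cases hu : u ≤ ε₀
    · exact H0 (by rw [Real.dist_eq, abs_lt]; constructor <;> linarith) x hx
    · have : 1 - ε₀ < u := by
        by_contra! h
        exact hu3 ⟨not_le.1 hu, h⟩
      exact H1 (by rw [Real.dist_eq, abs_lt]; constructor <;> linarith) x hx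
  have hpos : 0 < u * (1 - u) := mul_pos (by linarith) (by linarith)
  rw [bridge_cutoff_eq_zero hss hpos.ne' hfar, zero_div, zero_smul]
end

section
/- Let x₁, x₂ ∈ ℝ³, let γ₀ : [0,1] → ℝ³ be a smooth path with γ₀(0) = x₁, γ₀(1) = x₂, and let s : ℝ³ → ℝ be a smooth compactly supported function with supp s ⊆ closedBall(0, M). Define, for x ∈ ℝ³ \ {x₁, x₂}, b₀(x) = ∫₀¹ (u(1−u))^{−3} s( (x − γ₀(u))/(u(1−u)) ) · ( γ₀'(u) + (1−2u)(x − γ₀(u))/(u(1−u)) ) du. Then for every x ∈ ℝ³ \ {x₁, x₂} the integrand vanishes for u in neighborhoods of 0 and 1 (so the integral is well defined), b₀ is smooth on ℝ³ \ {x₁, x₂}, and div b₀ = 0 on ℝ³ \ {x₁, x₂}. (The gauge-bridge field is divergence-free away from the two static charges.) -/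
/-!
Write `w = u (1 - u)`, `z = (x - γ₀ u) / w` and `h(u, x) = s(z) / w³`, so that the integrand is
`F(u, x) = h(u, x) • (γ₀'(u) + w'(u) z)`. Three facts carry the proof.

* Localisation (`exists_bridgeScalar_eq_zero`): `s(z) ≠ 0` forces `‖x - γ₀ u‖ ≤ M w`, which fails
  on a neighbourhood of `(0, x)` when `x ≠ γ₀ 0`, and of `(1, x)` when `x ≠ γ₀ 1`. Hence near any
  `x` other than the two endpoints only parameters in a fixed `[η, 1 - η]` contribute to the
  integral.
* Smoothness (`contDiffOn_b0_ball`): extended by zero outside `(0, 1)`, the integrand is jointly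
  smooth and its support in `u` lies in that compact interval. Its integral over `u` is the value
  at `0` of its convolution with the constant `1`, so smoothness follows from the theorem on
  convolutions depending on a parameter.
* Continuity equation (`hasDerivAt_bridgeScalar`): for `0 < u < 1` one has
  `∂h/∂u = - div_x F(u, ·)`. Differentiating under the integral sign, `div b₀ (x)` is the integral
  of `-∂h/∂u` over `[a, 1 - a]` for small `a`, and `h` vanishes at both ends.
-/

open MeasureTheory

/-- Divergence of a vector field on ℝ³: `div v = ∂₁v₁ + ∂₂v₂ + ∂₃v₃`. -/
noncomputable def divE (v : E3 → E3) (x : E3) : ℝ :=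
  ∑ i, pdE (fun y => v y i) i x

/-- The integrand of the gauge-bridge field:
`(u(1−u))⁻³ s((x − γ₀(u))/(u(1−u))) (γ₀'(u) + (1−2u)(x − γ₀(u))/(u(1−u)))`. -/
noncomputable def bridgeIntegrand (γ₀ : ℝ → E3) (s : E3 → ℝ) (u : ℝ) (x : E3) : E3 :=
  (s ((u * (1 - u))⁻¹ • (x - γ₀ u)) / (u * (1 - u)) ^ 3) •
    (deriv γ₀ u + ((1 - 2 * u) * (u * (1 - u))⁻¹) • (x - γ₀ u))

/-- The gauge-bridge field `b₀(x) = ∫₀¹ bridgeIntegrand(u, x) du`. -/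
noncomputable def b0 (γ₀ : ℝ → E3) (s : E3 → ℝ) (x : E3) : E3 :=
  ∫ u in (0:ℝ)..1, bridgeIntegrand γ₀ s u x

open Set Filter Topology

/-- The scalar density `s((x - γ₀(u)) / w) / w³` with `w = u (1 - u)`. -/
noncomputable def bridgeScalar (γ₀ : ℝ → E3) (s : E3 → ℝ) (u : ℝ) (x : E3) : ℝ :=
  s ((u * (1 - u))⁻¹ • (x - γ₀ u)) / (u * (1 - u)) ^ 3

lemma bridgeIntegrand_eq_zero {γ₀ : ℝ → E3} {s : E3 → ℝ} {u : ℝ} {x : E3}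
    (h : bridgeScalar γ₀ s u x = 0) : bridgeIntegrand γ₀ s u x = 0 := by
  unfold bridgeScalar at h
  rw [bridgeIntegrand, h, zero_smul]

/-! ### Localisation in the path parameter -/

lemma bridgeScalar_eq_zero {γ₀ : ℝ → E3} {s : E3 → ℝ} {M : ℝ}
    (hss : tsupport s ⊆ Metric.closedBall 0 M) {u : ℝ} (hu : u ∈ Icc (0 : ℝ) 1) {y : E3}
    (h : M * (u * (1 - u)) < ‖y - γ₀ u‖) : bridgeScalar γ₀ s u y = 0 := by
  unfold bridgeScalar
  have hw : 0 ≤ u * (1 - u) := mul_nonneg hu.1 (by linarith [hu.2])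
  rcases hw.eq_or_lt with h0 | hpos
  -- at the endpoints of `[0, 1]` the quotient is a division by zero
  · simp [← h0]
  · suffices h0 : s ((u * (1 - u))⁻¹ • (y - γ₀ u)) = 0 by rw [h0, zero_div]
    refine image_eq_zero_of_notMem_tsupport fun hmem => ?_
    have h1 := hss hmem
    rw [mem_closedBall_zero_iff, norm_smul, norm_inv, Real.norm_of_nonneg hw,
      inv_mul_le_iff₀ hpos] at h1
    linarith

/-- The vanishing near `u = 0` and `u = 1` is locally uniform in the space variable. -/
lemma exists_bridgeScalar_eq_zero {γ₀ : ℝ → E3} (hγ : Continuous γ₀) {s : E3 → ℝ} {M : ℝ}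
    (hss : tsupport s ⊆ Metric.closedBall 0 M) {x : E3} (h0 : x ≠ γ₀ 0) (h1 : x ≠ γ₀ 1) :
    ∃ r > (0 : ℝ), ∃ η > (0 : ℝ), ∀ y ∈ Metric.ball x r, ∀ u ∈ Icc (0 : ℝ) 1,
      (u < η ∨ 1 - η < u) → bridgeScalar γ₀ s u y = 0 := by
  have hopen : IsOpen {p : ℝ × E3 | M * (p.1 * (1 - p.1)) < ‖p.2 - γ₀ p.1‖} :=
    isOpen_lt (by fun_prop) (by fun_prop)
  obtain ⟨ε₀, hε₀, H0⟩ := Metric.isOpen_iff.1 hopen (0, x) (by simp [sub_eq_zero, h0])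
  obtain ⟨ε₁, hε₁, H1⟩ := Metric.isOpen_iff.1 hopen (1, x) (by simp [sub_eq_zero, h1])
  refine ⟨min ε₀ ε₁, lt_min hε₀ hε₁, min ε₀ ε₁, lt_min hε₀ hε₁, fun y hy u hu h => ?_⟩
  rw [Metric.mem_ball, lt_min_iff] at hy
  apply bridgeScalar_eq_zero hss hu
  rcases h with h | h
  · rw [lt_min_iff] at h
    refine H0 (show (u, y) ∈ _ from ?_)
    rw [Metric.mem_ball, Prod.dist_eq, max_lt_iff]
    refine ⟨?_, hy.1⟩
    rw [Real.dist_eq, abs_lt]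
    constructor <;> linarith [hu.1]
  · have h' : 1 - u < min ε₀ ε₁ := by linarith
    rw [lt_min_iff] at h'
    refine H1 (show (u, y) ∈ _ from ?_)
    rw [Metric.mem_ball, Prod.dist_eq, max_lt_iff]
    refine ⟨?_, hy.2⟩
    rw [Real.dist_eq, abs_lt]
    constructor <;> linarith [hu.2]

/-! ### Smoothness -/

lemma contDiffAt_bridgeIntegrand {γ₀ : ℝ → E3} (hγ : ContDiff ℝ (⊤ : ℕ∞) γ₀) {s : E3 → ℝ}
    (hs : ContDiff ℝ (⊤ : ℕ∞) s) {u : ℝ} (hu : u ∈ Ioo (0 : ℝ) 1) (y : E3) :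
    ContDiffAt ℝ (⊤ : ℕ∞) (fun p : E3 × ℝ => bridgeIntegrand γ₀ s p.2 p.1) (y, u) := by
  have hw : u * (1 - u) ≠ 0 := (mul_pos hu.1 (by linarith [hu.2])).ne'
  have hd : ContDiff ℝ (⊤ : ℕ∞) (deriv γ₀) := (contDiff_infty_iff_deriv.1 hγ).2
  have hwd : ContDiffAt ℝ (⊤ : ℕ∞) (fun p : E3 × ℝ => p.2 * (1 - p.2)) (y, u) := by fun_prop
  have hwi : ContDiffAt ℝ (⊤ : ℕ∞) (fun p : E3 × ℝ => (p.2 * (1 - p.2))⁻¹) (y, u) :=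
    hwd.inv hw
  have hγc : ContDiffAt ℝ (⊤ : ℕ∞) (fun p : E3 × ℝ => p.1 - γ₀ p.2) (y, u) := by fun_prop
  have hdc : ContDiffAt ℝ (⊤ : ℕ∞) (fun p : E3 × ℝ => deriv γ₀ p.2) (y, u) := by fun_prop
  have hsc : ContDiffAt ℝ (⊤ : ℕ∞)
      (fun p : E3 × ℝ => s ((p.2 * (1 - p.2))⁻¹ • (p.1 - γ₀ p.2))) (y, u) :=
    hs.contDiffAt.comp (y, u) (hwi.smul hγc)
  have hl : ContDiffAt ℝ (⊤ : ℕ∞) (fun p : E3 × ℝ => 1 - 2 * p.2) (y, u) := by fun_prop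
  exact (hsc.div (hwd.pow 3) (pow_ne_zero 3 hw)).smul (hdc.add ((hl.mul hwi).smul hγc))

lemma contDiffOn_b0_ball {γ₀ : ℝ → E3} (hγ : ContDiff ℝ (⊤ : ℕ∞) γ₀) {s : E3 → ℝ}
    (hs : ContDiff ℝ (⊤ : ℕ∞) s) {x : E3} {r η : ℝ} (hη : 0 < η)
    (H : ∀ y ∈ Metric.ball x r, ∀ u ∈ Icc (0 : ℝ) 1,
      (u < η ∨ 1 - η < u) → bridgeScalar γ₀ s u y = 0) :
    ContDiffOn ℝ (⊤ : ℕ∞) (b0 γ₀ s) (Metric.ball x r) := by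
  let g : E3 → ℝ → E3 := fun y => (Ioo (0 : ℝ) 1).indicator (fun u => bridgeIntegrand γ₀ s u y)
  have hg0 : ∀ y ∈ Metric.ball x r, ∀ u, (u < η ∨ 1 - η < u) → g y u = 0 := by
    intro y hy u hu
    by_cases h : u ∈ Ioo (0 : ℝ) 1
    · simp only [g, indicator_of_mem h]
      exact bridgeIntegrand_eq_zero (H y hy u (Ioo_subset_Icc_self h) hu)
    · simp only [g, indicator_of_notMem h]
  have hconv := contDiffOn_convolution_left_with_param_comp (μ := (volume : Measure ℝ))
    (n := (⊤ : ℕ∞)) (ContinuousLinearMap.lsmul ℝ ℝ : ℝ →L[ℝ] E3 →L[ℝ] E3).flip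
    (s := Metric.ball x r) (v := fun _ => (0 : ℝ)) contDiffOn_const (f := fun _ => (1 : ℝ))
    (g := g) (k := Icc η (1 - η)) Metric.isOpen_ball isCompact_Icc ?_
    (locallyIntegrable_const _) ?_
  · refine hconv.congr fun y _ => ?_
    simp only [convolution, ContinuousLinearMap.flip_apply, ContinuousLinearMap.lsmul_apply,
      one_smul, g]
    rw [integral_indicator measurableSet_Ioo, b0,
      intervalIntegral.integral_of_le zero_le_one, integral_Ioc_eq_integral_Ioo]
  · intro y u hy hu
    refine hg0 y hy u ?_
    by_contra! hcon
    exact hu hcon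
  · rintro ⟨y, u⟩ ⟨hy, -⟩
    apply ContDiffAt.contDiffWithinAt
    have hyn : ∀ᶠ p : E3 × ℝ in 𝓝 (y, u), p.1 ∈ Metric.ball x r :=
      continuous_fst.continuousAt.eventually_mem (Metric.isOpen_ball.mem_nhds hy)
    by_cases h : u ∈ Ioo (0 : ℝ) 1
    · refine (contDiffAt_bridgeIntegrand hγ hs h y).congr_of_eventuallyEq ?_
      have : ∀ᶠ p : E3 × ℝ in 𝓝 (y, u), p.2 ∈ Ioo (0 : ℝ) 1 :=
        continuous_snd.continuousAt.eventually_mem (isOpen_Ioo.mem_nhds h)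
      filter_upwards [this] with p hp
      simp [Function.HasUncurry.uncurry, g, hp.1, hp.2]
    · have hu : u ∈ Iio η ∪ Ioi (1 - η) := by
        by_contra! hcon
        simp only [mem_union, mem_Iio, mem_Ioi, not_or, not_lt] at hcon
        exact h ⟨by linarith, by linarith⟩
      have : ∀ᶠ p : E3 × ℝ in 𝓝 (y, u), p.2 ∈ Iio η ∪ Ioi (1 - η) :=
        continuous_snd.continuousAt.eventually_mem ((isOpen_Iio.union isOpen_Ioi).mem_nhds hu)
      refine (contDiffAt_const (c := (0 : E3))).congr_of_eventuallyEq ?_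
      filter_upwards [this, hyn] with p hp hp1
      exact hg0 p.1 hp1 p.2 hp

/-! ### The continuity equation -/

lemma hasFDerivAt_bridgeIntegrand (γ₀ : ℝ → E3) {s : E3 → ℝ}
    (hs : Differentiable ℝ s) (u : ℝ) (x : E3) :
    HasFDerivAt (fun y => bridgeIntegrand γ₀ s u y)
      (bridgeScalar γ₀ s u x • (((1 - 2 * u) * (u * (1 - u))⁻¹) • ContinuousLinearMap.id ℝ E3) +
        ((((u * (1 - u)) ^ 3)⁻¹ • (fderiv ℝ s ((u * (1 - u))⁻¹ • (x - γ₀ u))).comp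
          ((u * (1 - u))⁻¹ • ContinuousLinearMap.id ℝ E3))).smulRight
          (deriv γ₀ u + ((1 - 2 * u) * (u * (1 - u))⁻¹) • (x - γ₀ u))) x := by
  have hid : HasFDerivAt (fun y : E3 => y - γ₀ u) (ContinuousLinearMap.id ℝ E3) x :=
    (hasFDerivAt_id x).sub_const _
  have hz := hid.const_smul (u * (1 - u))⁻¹
  have hsz := ((hs _).hasFDerivAt.comp x hz).mul_const ((u * (1 - u)) ^ 3)⁻¹
  have hV := (hid.const_smul ((1 - 2 * u) * (u * (1 - u))⁻¹)).const_add (deriv γ₀ u)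
  exact hsz.smul hV

/-- The integrand has the form `φ • V` with `dV = c • id`, so its divergence in `x` is
`3 φ c + dφ(V)`. -/
lemma divE_bridgeIntegrand (γ₀ : ℝ → E3) {s : E3 → ℝ}
    (hs : Differentiable ℝ s) (u : ℝ) (x : E3) :
    ∑ i, (fderiv ℝ (fun y => bridgeIntegrand γ₀ s u y) x (EuclideanSpace.single i 1)) i =
      3 * (bridgeScalar γ₀ s u x * ((1 - 2 * u) * (u * (1 - u))⁻¹)) +
        ((u * (1 - u)) ^ 3)⁻¹ * ((u * (1 - u))⁻¹ *
          fderiv ℝ s ((u * (1 - u))⁻¹ • (x - γ₀ u))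
            (deriv γ₀ u + ((1 - 2 * u) * (u * (1 - u))⁻¹) • (x - γ₀ u))) := by
  rw [(hasFDerivAt_bridgeIntegrand γ₀ hs u x).fderiv]
  set V := deriv γ₀ u + ((1 - 2 * u) * (u * (1 - u))⁻¹) • (x - γ₀ u) with hV
  set A := fderiv ℝ s ((u * (1 - u))⁻¹ • (x - γ₀ u))
  have hsum : A V = ∑ i, V i * A (EuclideanSpace.single i 1) := by
    conv_lhs => rw [← (EuclideanSpace.basisFun (Fin 3) ℝ).sum_repr V]
    simp [map_sum]
  rw [hsum]
  simp [Fin.sum_univ_three]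
  ring

/-- The continuity equation `∂h/∂u = - div_x F`, with `h = bridgeScalar γ₀ s` and
`F = bridgeIntegrand γ₀ s`; the sum is the divergence written through the Fréchet derivative. -/
lemma hasDerivAt_bridgeScalar {γ₀ : ℝ → E3} (hγ : Differentiable ℝ γ₀) {s : E3 → ℝ}
    (hs : Differentiable ℝ s) {u : ℝ} (hu : u ∈ Ioo (0 : ℝ) 1) (x : E3) :
    HasDerivAt (fun u => bridgeScalar γ₀ s u x)
      (-∑ i, (fderiv ℝ (fun y => bridgeIntegrand γ₀ s u y) x (EuclideanSpace.single i 1)) i) u := by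
  have hw : u * (1 - u) ≠ 0 := (mul_pos hu.1 (by linarith [hu.2])).ne'
  have hwd : HasDerivAt (fun u : ℝ => u * (1 - u)) (1 - 2 * u) u :=
    ((hasDerivAt_id' u).mul ((hasDerivAt_id' u).const_sub 1)).congr_deriv (by ring)
  have hz := (hwd.inv hw).smul ((hγ u).hasDerivAt.const_sub x)
  have hsz := (hs _).hasFDerivAt.comp_hasDerivAt u hz
  have hq := hsz.div (hwd.pow 3) (pow_ne_zero 3 hw)
  refine hq.congr_deriv ?_
  rw [divE_bridgeIntegrand γ₀ hs]
  simp only [bridgeScalar, map_add, map_smul, map_neg, smul_eq_mul, Function.comp, Pi.inv_apply,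
    Pi.pow_apply, Pi.smul_apply', smul_neg]
  generalize u * (1 - u) = w at *
  field_simp
  ring

/-! ### Differentiation under the integral sign -/

lemma hasFDerivAt_intervalIntegral_of_contDiffAt {G : E3 → ℝ → E3} {a b : ℝ} (hab : a ≤ b)
    (hG : ∀ u ∈ Icc a b, ∀ y, ContDiffAt ℝ (⊤ : ℕ∞) (fun p : E3 × ℝ => G p.1 p.2) (y, u))
    (x : E3) :
    ContinuousOn (fun u => fderiv ℝ (fun y => G y u) x) (Icc a b) ∧
    HasFDerivAt (fun y => ∫ u in a..b, G y u) (∫ u in a..b, fderiv ℝ (fun y => G y u) x) x := by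
  let J : E3 × ℝ → E3 →L[ℝ] E3 := fun p => fderiv ℝ (fun y => G y p.2) p.1
  have hpart : ∀ u ∈ Icc a b, ∀ y, HasFDerivAt (fun y => G y u)
      ((fderiv ℝ (fun p : E3 × ℝ => G p.1 p.2) (y, u)).comp
        (ContinuousLinearMap.inl ℝ E3 ℝ)) y := by
    intro u hu y
    have hl : HasFDerivAt (fun y : E3 => (y, u)) (ContinuousLinearMap.inl ℝ E3 ℝ) y :=
      hasFDerivAt_prodMk_left y u
    have hd : HasFDerivAt (fun p : E3 × ℝ => G p.1 p.2) _ (y, u) :=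
      ((hG u hu y).differentiableAt (by simp)).hasFDerivAt
    exact HasFDerivAt.comp y hd hl
  have hJ : ContinuousOn J (univ ×ˢ Icc a b) := by
    have : ContinuousOn (fun p : E3 × ℝ => (fderiv ℝ (fun p : E3 × ℝ => G p.1 p.2) p).comp
        (ContinuousLinearMap.inl ℝ E3 ℝ)) (univ ×ˢ Icc a b) := by
      refine ContinuousOn.clm_comp ?_ continuousOn_const
      rintro ⟨y, u⟩ ⟨-, hu⟩
      exact ((hG u hu y).continuousAt_fderiv (by simp)).continuousWithinAt
    refine this.congr ?_
    rintro ⟨y, u⟩ ⟨-, hu⟩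
    exact (hpart u hu y).fderiv
  have hGc : ∀ y, ContinuousOn (G y) (Icc a b) := by
    intro y u hu
    have : ContinuousAt (fun v => (fun p : E3 × ℝ => G p.1 p.2) (y, v)) u :=
      ContinuousAt.comp (f := fun v : ℝ => (y, v)) (hG u hu y).continuousAt (by fun_prop)
    exact this.continuousWithinAt
  have hJx : ∀ y, ContinuousOn (fun u => J (y, u)) (Icc a b) := fun y =>
    hJ.comp (by fun_prop) (fun u hu => ⟨mem_univ _, hu⟩)
  have hIoc : uIoc a b ⊆ Icc a b := by
    rw [uIoc_of_le hab]; exact Ioc_subset_Icc_self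
  obtain ⟨C, hC⟩ := ((isCompact_closedBall x 1).prod (isCompact_Icc (a := a) (b := b))
    ).exists_bound_of_continuousOn (hJ.mono (prod_mono (subset_univ _) subset_rfl))
  refine ⟨hJx x, ?_⟩
  refine intervalIntegral.hasFDerivAt_integral_of_dominated_of_fderiv_le
    (F := G) (F' := fun y u => J (y, u)) (bound := fun _ => C)
    (Metric.closedBall_mem_nhds x one_pos) ?_ ?_ ?_ ?_ ?_ ?_
  · exact Eventually.of_forall fun y =>
      ((hGc y).mono hIoc).aestronglyMeasurable measurableSet_uIoc
  · exact ContinuousOn.intervalIntegrable_of_Icc hab (hGc x)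
  · exact ((hJx x).mono hIoc).aestronglyMeasurable measurableSet_uIoc
  · exact Eventually.of_forall fun u hu y hy => hC (y, u) ⟨hy, hIoc hu⟩
  · exact intervalIntegrable_const
  · exact Eventually.of_forall fun u hu y _ =>
      (hpart u (hIoc hu) y).differentiableAt.hasFDerivAt

lemma divE_eq_sum_of_hasFDerivAt {v : E3 → E3} {v' : E3 →L[ℝ] E3} {x : E3}
    (h : HasFDerivAt v v' x) : divE v x = ∑ i, (v' (EuclideanSpace.single i 1)) i := by
  refine Finset.sum_congr rfl fun i _ => ?_
  have hi := (EuclideanSpace.proj i : E3 →L[ℝ] ℝ).hasFDerivAt.comp x h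
  unfold pdE
  erw [hi.fderiv]
  rfl

/-- The trace, in the form in which it appears in `divE`, as a continuous linear functional; it
passes through the integral. -/
noncomputable def traceE : (E3 →L[ℝ] E3) →L[ℝ] ℝ :=
  ∑ i, (EuclideanSpace.proj i : E3 →L[ℝ] ℝ).comp
    (ContinuousLinearMap.apply ℝ E3 (EuclideanSpace.single i 1))

lemma traceE_apply (A : E3 →L[ℝ] E3) :
    traceE A = ∑ i, (A (EuclideanSpace.single i 1)) i := by
  simp [traceE]

lemma divE_b0_eq_zero {γ₀ : ℝ → E3} (hγ : ContDiff ℝ (⊤ : ℕ∞) γ₀) {s : E3 → ℝ}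
    (hs : ContDiff ℝ (⊤ : ℕ∞) s) {x : E3} {r η : ℝ} (hr : 0 < r) (hη : 0 < η)
    (H : ∀ y ∈ Metric.ball x r, ∀ u ∈ Icc (0 : ℝ) 1,
      (u < η ∨ 1 - η < u) → bridgeScalar γ₀ s u y = 0) :
    divE (b0 γ₀ s) x = 0 := by
  obtain ⟨a, ha0, ha⟩ : ∃ a, 0 < a ∧ a < min η (1 / 2) := exists_between (by positivity)
  rw [lt_min_iff] at ha
  have hab : a ≤ 1 - a := by linarith
  have hIcc : ∀ u ∈ Icc a (1 - a), u ∈ Ioo (0 : ℝ) 1 := fun u hu =>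
    ⟨by linarith [hu.1], by linarith [hu.2]⟩
  -- near `x` the field is the integral over `[a, 1 - a]`, away from the singular endpoints
  have hloc : b0 γ₀ s =ᶠ[𝓝 x] fun y => ∫ u in a..(1 - a), bridgeIntegrand γ₀ s u y := by
    filter_upwards [Metric.ball_mem_nhds x hr] with y hy
    have hsub : Ioc a (1 - a) ⊆ Ioc 0 1 := Ioc_subset_Ioc ha0.le (by linarith)
    rw [b0, intervalIntegral.integral_of_le zero_le_one, intervalIntegral.integral_of_le hab]
    refine (setIntegral_eq_of_subset_of_forall_sdiff_eq_zero (μ := volume)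
      (f := fun u => bridgeIntegrand γ₀ s u y) measurableSet_Ioc hsub ?_)
    rintro u ⟨hu, hnu⟩
    refine bridgeIntegrand_eq_zero (H y hy u (Ioc_subset_Icc_self hu) ?_)
    by_contra! hcon
    exact hnu ⟨by linarith, by linarith⟩
  obtain ⟨hcont, hder⟩ := hasFDerivAt_intervalIntegral_of_contDiffAt
    (G := fun y u => bridgeIntegrand γ₀ s u y) hab
    (fun u hu y => contDiffAt_bridgeIntegrand hγ hs (hIcc u hu) y) x
  rw [divE_eq_sum_of_hasFDerivAt (hder.congr_of_eventuallyEq hloc), ← traceE_apply,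
    ← traceE.intervalIntegral_comp_comm (hcont.intervalIntegrable_of_Icc hab)]
  have hFTC := intervalIntegral.integral_eq_sub_of_hasDerivAt (a := a) (b := 1 - a)
    (f := fun u => bridgeScalar γ₀ s u x)
    (f' := fun u => -traceE (fderiv ℝ (fun y => bridgeIntegrand γ₀ s u y) x)) ?_ ?_
  · rw [intervalIntegral.integral_neg,
      H x (Metric.mem_ball_self hr) a ⟨ha0.le, by linarith⟩ (Or.inl ha.1),
      H x (Metric.mem_ball_self hr) (1 - a) ⟨by linarith, by linarith⟩
        (Or.inr (by linarith))] at hFTC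
    linarith
  · intro u hu
    rw [uIcc_of_le hab] at hu
    rw [traceE_apply]
    exact hasDerivAt_bridgeScalar (hγ.differentiable (by simp)) (hs.differentiable (by simp))
      (hIcc u hu) x
  · exact ((traceE.continuous.comp_continuousOn hcont).neg).intervalIntegrable_of_Icc hab

/-- Away from the two static charges `x₁, x₂`, the integrand of the gauge-bridge field
vanishes for `u` near `0` and `1` (so `b₀` is well defined), `b₀` is smooth on
`ℝ³ \ {x₁, x₂}`, and it is divergence-free there. -/
theorem b0_smooth_divergence_free (x₁ x₂ : E3) (γ₀ : ℝ → E3)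
    (hγ : ContDiff ℝ (⊤ : ℕ∞) γ₀) (hγ0 : γ₀ 0 = x₁) (hγ1 : γ₀ 1 = x₂)
    (s : E3 → ℝ) (hs : ContDiff ℝ (⊤ : ℕ∞) s) (hsc : HasCompactSupport s)
    (M : ℝ) (hss : tsupport s ⊆ Metric.closedBall 0 M) :
    (∀ x : E3, x ≠ x₁ → x ≠ x₂ → ∃ η > (0:ℝ), ∀ u ∈ Set.Icc (0:ℝ) 1,
      (u < η ∨ 1 - η < u) → bridgeIntegrand γ₀ s u x = 0) ∧
    ContDiffOn ℝ (⊤ : ℕ∞) (b0 γ₀ s) ({x₁, x₂} : Set E3)ᶜ ∧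
    (∀ x : E3, x ≠ x₁ → x ≠ x₂ → divE (b0 γ₀ s) x = 0) := by
  subst hγ0 hγ1
  refine ⟨fun x h0 h1 => ?_, fun x hx => ?_, fun x h0 h1 => ?_⟩
  · obtain ⟨r, hr, η, hη, H⟩ := exists_bridgeScalar_eq_zero hγ.continuous hss h0 h1
    exact ⟨η, hη, fun u hu h =>
      bridgeIntegrand_eq_zero (H x (Metric.mem_ball_self hr) u hu h)⟩
  · simp only [mem_compl_iff, mem_insert_iff, mem_singleton_iff, not_or] at hx
    obtain ⟨r, hr, η, hη, H⟩ := exists_bridgeScalar_eq_zero hγ.continuous hss hx.1 hx.2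
    exact ((contDiffOn_b0_ball hγ hs hη H).contDiffAt
      (Metric.ball_mem_nhds x hr)).contDiffWithinAt
  · obtain ⟨r, hr, η, hη, H⟩ := exists_bridgeScalar_eq_zero hγ.continuous hss h0 h1
    exact divE_b0_eq_zero hγ hs hr hη H
end
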